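/- arXiv:2507.18991 — 2 statements merged into one kernel-verified Lean document; each statement's English description precedes it below -/
import Mathlib

section
/- Let n = 2, and fix an integer k₀ ≥ 1 and θ ∈ (0,1). Then there exists N₀ > 0 such that for every harmonic function u on the unit disc B₁ ⊂ ℝ² satisfying: the set {u ≠ 0} ∩ B₁ has at most k₀ connected components and ∫_{B_{1/2}} u² dx = 1, one has N(0,u,θ) ≤ N₀. -/
open MeasureTheory Metric Filter

/-- The Laplacian of `u : ℝⁿ → ℝ` at `x`, as the sum of second partial derivatives. -/
noncomputable def lapl {n : ℕ} (u : EuclideanSpace ℝ (Fin n) → ℝ)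
    (x : EuclideanSpace ℝ (Fin n)) : ℝ :=
  ∑ i, fderiv ℝ (fun y => fderiv ℝ u y (EuclideanSpace.single i 1)) x (EuclideanSpace.single i 1)

/-- `u` is harmonic on all of ℝⁿ: it is C² and its Laplacian vanishes identically. -/
def HarmonicFn {n : ℕ} (u : EuclideanSpace ℝ (Fin n) → ℝ) : Prop :=
  ContDiff ℝ 2 u ∧ ∀ x, lapl u x = 0

/-- `u` is harmonic on the (open) set `Ω`: it is C² on `Ω` and its Laplacian vanishes on `Ω`. -/
def HarmonicFnOn {n : ℕ} (u : EuclideanSpace ℝ (Fin n) → ℝ)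
    (Ω : Set (EuclideanSpace ℝ (Fin n))) : Prop :=
  ContDiffOn ℝ 2 u Ω ∧ ∀ x ∈ Ω, lapl u x = 0

/-- The Dirichlet integral `D(x₀,u,r) = ∫_{B_r(x₀)} |∇u|² dx`. -/
noncomputable def DInt {n : ℕ} (u : EuclideanSpace ℝ (Fin n) → ℝ)
    (x₀ : EuclideanSpace ℝ (Fin n)) (r : ℝ) : ℝ :=
  ∫ x in Metric.ball x₀ r, ‖gradient u x‖ ^ 2

/-- The height `H(x₀,u,r) = ∫_{∂B_r(x₀)} u² dσ`, with respect to the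
`(n-1)`-dimensional Hausdorff measure on the sphere. -/
noncomputable def HInt {n : ℕ} (u : EuclideanSpace ℝ (Fin n) → ℝ)
    (x₀ : EuclideanSpace ℝ (Fin n)) (r : ℝ) : ℝ :=
  ∫ x in Metric.sphere x₀ r, (u x) ^ 2 ∂ μH[(n : ℝ) - 1]

/-- The Almgren frequency `N(x₀,u,r) = r · D(x₀,u,r) / H(x₀,u,r)`. -/
noncomputable def freqN {n : ℕ} (u : EuclideanSpace ℝ (Fin n) → ℝ)
    (x₀ : EuclideanSpace ℝ (Fin n)) (r : ℝ) : ℝ :=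
  r * DInt u x₀ r / HInt u x₀ r

/-- The set of connected components of a subset `S` of a topological space. -/
def nodalComponents {X : Type*} [TopologicalSpace X] (S : Set X) : Set (Set X) :=
  {C | ∃ x ∈ S, connectedComponentIn S x = C}

lemma aux_log_exists {K V : Set ℂ} (hK : IsCompact K) (hV : IsPreconnected V) (hVK : Disjoint V K)
    {a b : ℂ} (ha : a ∈ V) (hb : b ∈ V) :
    ∃ L : ℂ → ℂ, ContinuousOn L K ∧ ∀ z ∈ K, Complex.exp (L z) * (z - b) = z - a := by
  refine hV.induction₂' (fun x y => ∃ L : ℂ → ℂ, ContinuousOn L K ∧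
    ∀ z ∈ K, Complex.exp (L z) * (z - y) = z - x) ?_ ?_ ha hb
  · intro x hx
    have hxK : x ∉ K := fun h => Set.disjoint_left.1 hVK hx h
    have : Kᶜ ∈ nhds x := hK.isClosed.isOpen_compl.mem_nhds hxK
    obtain ⟨ε, hε, hb⟩ := Metric.mem_nhds_iff.1 this
    have key : ∀ z ∈ K, ε ≤ ‖z - x‖ := by
      intro z hz
      by_contra h
      push Not at h
      exact hb (by simpa [dist_eq_norm] using h) hz
    refine (eventually_nhdsWithin_of_eventually_nhds ?_)
    filter_upwards [Metric.ball_mem_nhds x hε] with y hy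
    rw [Metric.mem_ball, dist_eq_norm] at hy
    have hne : ∀ z ∈ K, z - x ≠ 0 := fun z hz h => by
      have := key z hz; rw [h, norm_zero] at this; linarith
    have hsl : ∀ z ∈ K, (1 + (x - y) / (z - x)) ∈ Complex.slitPlane := by
      intro z hz
      apply Complex.mem_slitPlane_of_norm_lt_one
      rw [norm_div, div_lt_one (norm_pos_iff.2 (hne z hz)), norm_sub_rev]
      exact hy.trans_le (key z hz)
    have hcont : ContinuousOn (fun z => Complex.log (1 + (x - y) / (z - x))) K := by
      apply ContinuousOn.clog _ hsl
      apply continuousOn_const.add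
      exact continuousOn_const.div (by fun_prop) hne
    have hexp : ∀ z ∈ K, Complex.exp (Complex.log (1 + (x - y) / (z - x))) * (z - x) = z - y := by
      intro z hz
      rw [Complex.exp_log (Complex.slitPlane_ne_zero (hsl z hz))]
      have := hne z hz
      field_simp
      ring
    refine ⟨⟨fun z => - Complex.log (1 + (x - y) / (z - x)), hcont.neg, ?_⟩, ⟨_, hcont, hexp⟩⟩
    intro z hz
    rw [← hexp z hz, ← mul_assoc, ← Complex.exp_add]
    simp
  · rintro x y z _ _ _ ⟨L, hL, h⟩ ⟨L', hL', h'⟩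
    refine ⟨fun w => L w + L' w, hL.add hL', fun w hw => ?_⟩
    rw [Complex.exp_add, mul_assoc, h' w hw, h w hw]

lemma aux_ratio_slit {ε : ℝ} (hε : 0 < ε) {w : ℂ} (hw : ¬ (w.re = 0 ∧ |w.im| ≤ ε)) :
    (w - ε * Complex.I) / (w + ε * Complex.I) ∈ Complex.slitPlane := by
  have hne : w + ε * Complex.I ≠ 0 := by
    intro h
    apply hw
    have h1 := congrArg Complex.re h
    have h2 := congrArg Complex.im h
    simp at h1 h2
    refine ⟨h1, ?_⟩
    rw [show w.im = -ε by linarith, abs_neg, abs_of_pos hε]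
  have hn : 0 < Complex.normSq (w + ε * Complex.I) := Complex.normSq_pos.2 hne
  rw [Complex.mem_slitPlane_iff, Complex.div_re, Complex.div_im]
  simp only [Complex.sub_re, Complex.sub_im, Complex.add_re, Complex.add_im, Complex.mul_re, Complex.mul_im,
    Complex.ofReal_re, Complex.ofReal_im, Complex.I_re, Complex.I_im]
  rw [← add_div, ← sub_div]
  by_cases h0 : w.re = 0
  · left
    have : ε < |w.im| := by
      by_contra h
      exact hw ⟨h0, not_lt.1 h⟩
    apply div_pos _ hn
    have := sq_lt_sq' (by linarith) this
    rw [sq_abs] at this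
    rw [h0]; nlinarith
  · right
    apply div_ne_zero _ hn.ne'
    ring_nf
    simp [h0, hε.ne']
    
lemma aux_sep {K : Set ℂ} (hK : IsCompact K) {z₁ e : ℂ} (he : e ≠ 0) {ε ρ : ℝ} (hε : 0 < ε)
    (hρ : 0 < ρ) (hz₁ : z₁ ∈ K)
    (hseg : ∀ s : ℝ, |s| < ρ → z₁ + e * s ∈ K)
    (hconn : IsPreconnected (K \ {z₁}))
    (hmeet : ∀ w : ℂ, z₁ + e * w ∈ K → w.re = 0 → |w.im| ≤ ε → w = 0)
    {V : Set ℂ} (hV : IsPreconnected V) (hVK : Disjoint V K)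
    (ha : z₁ + e * (ε * Complex.I) ∈ V) (hb : z₁ + e * (-(ε * Complex.I)) ∈ V) : False := by
  obtain ⟨L, hL, hexp⟩ := aux_log_exists hK hV hVK ha hb
  -- ratio
  set q : ℂ → ℂ := fun z => ((z - z₁) / e - ε * Complex.I) / ((z - z₁) / e + ε * Complex.I) with hq
  have hqs : ∀ z ∈ K \ {z₁}, q z ∈ Complex.slitPlane := by
    intro z hz
    apply aux_ratio_slit hε
    rintro ⟨h1, h2⟩
    have : z₁ + e * ((z - z₁) / e) = z := by field_simp; ring
    have h3 := hmeet ((z - z₁) / e) (by rw [this]; exact hz.1) h1 h2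
    rw [h3] at this
    exact hz.2 (by simpa using this.symm)
  have hden : ∀ z ∈ K, (z - z₁) / e + ε * Complex.I ≠ 0 := by
    intro z hz h
    have h1 : z = z₁ + e * (-(ε * Complex.I)) := by
      rw [← eq_neg_iff_add_eq_zero] at h
      rw [← h]; field_simp; ring
    exact Set.disjoint_left.1 hVK hb (h1 ▸ hz)
  have hexpq : ∀ z ∈ K, Complex.exp (L z) = q z := by
    intro z hz
    have h := hexp z hz
    have hd := hden z hz
    rw [hq]; simp only
    rw [eq_div_iff hd]
    have e1 : (z - z₁) / e + ε * Complex.I = (z - (z₁ + e * (-(ε * Complex.I)))) / e := by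
      field_simp; ring
    have e2 : (z - z₁) / e - ε * Complex.I = (z - (z₁ + e * ((ε * Complex.I)))) / e := by
      field_simp; ring
    rw [e1, e2, ← h]; ring
  have hqc : ContinuousOn q K := by
    apply ContinuousOn.div _ _ hden <;> fun_prop
  set G : ℂ → ℂ := fun z => (L z - Complex.log (q z)) / (2 * Real.pi * Complex.I) with hG
  have hGc : ContinuousOn G (K \ {z₁}) := by
    apply ContinuousOn.div_const
    exact (hL.mono Set.sdiff_subset).sub ((hqc.mono Set.sdiff_subset).clog hqs)
  have hGint : ∀ z ∈ K \ {z₁}, ∃ n : ℤ, G z = n := by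
    intro z hz
    have h1 : Complex.exp (L z) = Complex.exp (Complex.log (q z)) := by
      rw [Complex.exp_log (Complex.slitPlane_ne_zero (hqs z hz)), hexpq z hz.1]
    obtain ⟨n, hn⟩ := Complex.exp_eq_exp_iff_exists_int.1 h1
    refine ⟨n, ?_⟩
    rw [hG]; simp only
    rw [hn]
    have : (2 * Real.pi * Complex.I : ℂ) ≠ 0 := Complex.two_pi_I_ne_zero
    field_simp
    ring
  have hGconst : ∀ x ∈ K \ {z₁}, ∀ y ∈ K \ {z₁}, G x = G y := by
    intro x hx y hy
    have him : IsPreconnected (G '' (K \ {z₁})) := hconn.image G hGc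
    have hsub : G '' (K \ {z₁}) ⊆ Set.range ((↑) : ℤ → ℂ) := by
      rintro _ ⟨z, hz, rfl⟩
      obtain ⟨n, hn⟩ := hGint z hz
      exact ⟨n, hn.symm⟩
    have hcount : (G '' (K \ {z₁})).Countable := (Set.countable_range _).mono hsub
    exact Set.Countable.isTotallyDisconnected hcount _ subset_rfl him ⟨x, hx, rfl⟩ ⟨y, hy, rfl⟩
  -- take the limit
  have hlim : Tendsto (fun s : ℝ => L (z₁ + e * s)) (nhds 0) (nhds (L z₁)) := by
    have h1 : Tendsto (fun s : ℝ => z₁ + e * s) (nhds 0) (nhdsWithin z₁ K) := by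
      apply tendsto_nhdsWithin_of_tendsto_nhds_of_eventually_within
      · have : Continuous (fun s : ℝ => z₁ + e * (s : ℂ)) := by fun_prop
        simpa using this.tendsto 0
      · have : Set.Ioo (-ρ) ρ ∈ nhds (0 : ℝ) := Ioo_mem_nhds (by linarith) hρ
        filter_upwards [this] with s hs
        exact hseg s (abs_lt.2 hs)
    exact (hL z₁ hz₁).tendsto.comp h1
  have hlim2 : Tendsto (fun s : ℝ => L (z₁ + e * ((-s : ℝ) : ℂ))) (nhds 0) (nhds (L z₁)) := by
    have : Tendsto (fun s : ℝ => -s) (nhds 0) (nhds 0) := by simpa using (continuous_neg.tendsto (0:ℝ))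
    exact hlim.comp this
  have hd : Tendsto (fun s : ℝ => ‖L (z₁ + e * s) - L (z₁ + e * ((-s : ℝ) : ℂ))‖) (nhds 0) (nhds 0) := by
    simpa using (hlim.sub hlim2).norm
  have hev : ∀ᶠ s : ℝ in nhdsWithin (0:ℝ) (Set.Ioi 0),
      ‖L (z₁ + e * s) - L (z₁ + e * ((-s : ℝ) : ℂ))‖ < Real.pi :=
    (hd.eventually (gt_mem_nhds Real.pi_pos)).filter_mono nhdsWithin_le_nhds
  have hev2 : ∀ᶠ s in nhdsWithin (0:ℝ) (Set.Ioi 0), s ∈ Set.Ioo 0 (min ε ρ) :=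
    Ioo_mem_nhdsGT (lt_min hε hρ)
  obtain ⟨s, hs1, hs0, hs2⟩ := (hev.and hev2).exists
  have hsε := hs2.trans_le (min_le_left _ _)
  have hsρ := hs2.trans_le (min_le_right _ _)
  have hmem : ∀ s : ℝ, s ≠ 0 → |s| < ρ → z₁ + e * s ∈ K \ {z₁} := by
    intro s hs hs'
    refine ⟨hseg s hs', ?_⟩
    simp [he, hs]
  have hm1 := hmem s hs0.ne' (by rw [abs_of_pos hs0]; exact hsρ)
  have hm2 := hmem (-s) (by linarith) (by rw [abs_neg, abs_of_pos hs0]; exact hsρ)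
  have hGG := hGconst _ hm1 _ hm2
  have hqv : ∀ s : ℝ, q (z₁ + e * s) = (s - ε * Complex.I) / (s + ε * Complex.I) := by
    intro s
    rw [hq]; simp only
    rw [show (z₁ + e * s - z₁) / e = (s : ℂ) by field_simp; ring]
  have hconj : q (z₁ + e * ((-s : ℝ) : ℂ)) = (starRingEnd ℂ) (q (z₁ + e * s)) := by
    rw [hqv, hqv, map_div₀]
    simp only [map_sub, map_add, map_mul, Complex.conj_ofReal, Complex.conj_I]
    push_cast
    rw [← neg_div_neg_eq]
    congr 1 <;> ring
  have hsl := hqs _ hm1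
  have hlogconj : Complex.log (q (z₁ + e * ((-s : ℝ) : ℂ))) = (starRingEnd ℂ) (Complex.log (q (z₁ + e * s))) := by
    rw [hconj, Complex.log_conj _ (Complex.slitPlane_arg_ne_pi hsl)]
  have hdiff : L (z₁ + e * s) - L (z₁ + e * ((-s : ℝ) : ℂ)) =
      Complex.log (q (z₁ + e * s)) - Complex.log (q (z₁ + e * ((-s : ℝ) : ℂ))) := by
    have : (2 * Real.pi * Complex.I : ℂ) ≠ 0 := Complex.two_pi_I_ne_zero
    simp only [hG] at hGG
    rw [div_left_inj' this] at hGG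
    linear_combination hGG
  rw [hdiff, hlogconj, Complex.sub_conj, Complex.log_im] at hs1
  have harg : Real.pi / 2 < |Complex.arg (q (z₁ + e * s))| := by
    by_contra h
    push Not at h
    rw [Complex.abs_arg_le_pi_div_two_iff, hqv, Complex.div_re, ← add_div] at h
    have hn : 0 < Complex.normSq (s + ε * Complex.I : ℂ) := by
      rw [Complex.normSq_pos]
      intro h
      have := congrArg Complex.re h
      simp at this
      linarith
    rw [le_div_iff₀ hn] at h
    simp at h
    nlinarith
  simp at hs1
  linarith

lemma aux_compl_closedBall {R : ℝ} (hR : 0 < R) : IsPreconnected ((closedBall (0:ℂ) R)ᶜ) := by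
  have h1 : IsPreconnected {z : ℂ | Real.log R < z.re} := by
    exact (convex_halfSpace_re_gt _).isPreconnected
  have h2 := h1.image Complex.exp Complex.continuous_exp.continuousOn
  convert h2 using 1
  ext z
  simp only [Set.mem_compl_iff, mem_closedBall, dist_zero_right, not_le, Set.mem_image]
  constructor
  · intro h
    have hz : z ≠ 0 := by rintro rfl; simp at h; linarith
    refine ⟨Complex.log z, ?_, Complex.exp_log hz⟩
    rw [Set.mem_ofPred_eq, Complex.log_re]
    exact Real.log_lt_log hR h
  · rintro ⟨w, hw, rfl⟩
    rw [Complex.norm_exp]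
    exact (Real.log_lt_iff_lt_exp hR).1 hw

lemma aux_maxprin {f : ℂ → ℂ} (hf : AnalyticOnNhd ℂ f (ball 0 1)) {V K : Set ℂ} {R t : ℝ}
    (hR : R < 1) (hVo : IsOpen V) (hVR : V ⊆ closedBall 0 R) (hfr : closure V \ V ⊆ K)
    (hKt : ∀ z ∈ K, (f z).re = 0 → (f z).im = t) {z₀ z₁ : ℂ} (hz₀ : z₀ ∈ V) (h0 : (f z₀).re = 0)
    (hz₁ : z₁ ∈ ball (0:ℂ) 1) (hd : deriv f z₁ ≠ 0) : False := by
  have hcl : closure V ⊆ closedBall 0 R := closure_minimal hVR isClosed_closedBall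
  have hclb : closure V ⊆ ball 0 1 := hcl.trans (closedBall_subset_ball hR)
  have hopen : ∀ z ∈ V, f '' V ∈ nhds (f z) := by
    intro z hz
    have hb : IsPreconnected (ball (0:ℂ) 1) := (convex_ball _ _).isPreconnected
    rcases hf.is_constant_or_isOpen hb with ⟨w, hw⟩ | h
    · exfalso
      apply hd
      have : f =ᶠ[nhds z₁] fun _ => w := by
        filter_upwards [isOpen_ball.mem_nhds hz₁] with y hy using hw y hy
      rw [this.deriv_eq]; simp
    · exact (h V (subset_closure.trans hclb) hVo).mem_nhds ⟨z, hz, rfl⟩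
  -- near any nodal point of V, larger and smaller values
  have hpert : ∀ z ∈ V, (f z).re = 0 → ∃ δ > 0, ∀ s : ℝ, |s| < δ → ∃ y ∈ V, (f y).re = 0 ∧ (f y).im = (f z).im + s := by
    intro z hz hre
    obtain ⟨δ, hδ, hb⟩ := Metric.mem_nhds_iff.1 (hopen z hz)
    refine ⟨δ, hδ, fun s hs => ?_⟩
    have : f z + s * Complex.I ∈ ball (f z) δ := by
      simpa using hs
    obtain ⟨y, hy, hfy⟩ := hb this
    refine ⟨y, hy, ?_, ?_⟩ <;> rw [hfy] <;> simp [hre]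
  set Z : Set ℂ := closure V ∩ {z | (f z).re = 0} with hZ
  have hfc : ContinuousOn f (closure V) := hf.continuousOn.mono hclb
  have hcomp : IsCompact (closure V) := (isCompact_closedBall (0:ℂ) R).of_isClosed_subset isClosed_closure hcl
  have hZc : IsCompact Z := by
    apply hcomp.of_isClosed_subset _ Set.inter_subset_left
    exact (Complex.continuous_re.comp_continuousOn hfc).preimage_isClosed_of_isClosed isClosed_closure isClosed_singleton
  have hZn : Z.Nonempty := ⟨z₀, subset_closure hz₀, h0⟩
  have himc : ContinuousOn (fun z => (f z).im) Z :=
    Complex.continuous_im.comp_continuousOn (hfc.mono Set.inter_subset_left)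
  obtain ⟨M, hM, hMm⟩ := hZc.exists_isMaxOn hZn himc
  obtain ⟨m, hm, hmm⟩ := hZc.exists_isMinOn hZn himc
  have hnotmax : ∀ z ∈ V, (f z).re = 0 → (f z).im < (f M).im := by
    intro z hz hre
    obtain ⟨δ, hδ, h⟩ := hpert z hz hre
    obtain ⟨y, hy, h1, h2⟩ := h (δ/2) (by rw [abs_of_pos (by linarith)]; linarith)
    have := hMm (⟨subset_closure hy, h1⟩ : y ∈ Z)
    simp only [Set.mem_ofPred_eq] at this
    linarith
  have hnotmin : ∀ z ∈ V, (f z).re = 0 → (f m).im < (f z).im := by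
    intro z hz hre
    obtain ⟨δ, hδ, h⟩ := hpert z hz hre
    obtain ⟨y, hy, h1, h2⟩ := h (-(δ/2)) (by rw [abs_neg, abs_of_pos (by linarith)]; linarith)
    have := hmm (⟨subset_closure hy, h1⟩ : y ∈ Z)
    simp only [Set.mem_ofPred_eq] at this
    linarith
  have hMt : (f M).im = t := by
    apply hKt M (hfr ⟨hM.1, fun h => lt_irrefl _ (hnotmax M h hM.2)⟩) hM.2
  have hmt : (f m).im = t := by
    apply hKt m (hfr ⟨hm.1, fun h => lt_irrefl _ (hnotmin m h hm.2)⟩) hm.2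
  have := hnotmax z₀ hz₀ h0
  have := hnotmin z₀ hz₀ h0
  linarith

structure AuxCone (f : ℂ → ℂ) (z e : ℂ) (η : ℝ) : Prop where
  norm_e : ‖e‖ = 1
  pos : 0 < η
  mem : ∀ w : ℂ, ‖w‖ < η → z + e * w ∈ ball (0:ℂ) 1
  up : ∀ w : ℂ, 0 < ‖w‖ → ‖w‖ < η → ‖w‖ ≤ 2 * w.re → 0 < (f (z + e * w)).re
  down : ∀ w : ℂ, 0 < ‖w‖ → ‖w‖ < η → ‖w‖ ≤ -2 * w.re → (f (z + e * w)).re < 0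

lemma aux_cone_exists {f : ℂ → ℂ} (hf : AnalyticOnNhd ℂ f (ball 0 1)) {z : ℂ}
    (hz : z ∈ ball (0:ℂ) 1) (h0 : (f z).re = 0) (hd : deriv f z ≠ 0) :
    ∃ e η, AuxCone f z e η := by
  set c := deriv f z with hc
  have hcn : 0 < ‖c‖ := norm_pos_iff.2 hd
  set e : ℂ := (‖c‖ : ℂ) / c with he
  have hce : c * e = ‖c‖ := by rw [he]; field_simp
  have hne : ‖e‖ = 1 := by rw [he, norm_div]; simp [hcn.ne']
  have hder : HasDerivAt f c z := (hf z hz).differentiableAt.hasDerivAt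
  have hlo := (hasDerivAt_iff_isLittleO_nhds_zero.1 hder).def (show 0 < ‖c‖/4 by positivity)
  obtain ⟨η₁, hη₁, hb1⟩ := Metric.eventually_nhds_iff.1 hlo
  obtain ⟨η₂, hη₂, hb2⟩ := Metric.mem_nhds_iff.1 (isOpen_ball.mem_nhds hz)
  have key : ∀ w : ℂ, ‖w‖ < min η₁ η₂ → |(f (z + e * w)).re - ‖c‖ * w.re| ≤ ‖c‖ / 4 * ‖w‖ := by
    intro w hw
    have hew : ‖e * w‖ = ‖w‖ := by rw [norm_mul, hne, one_mul]
    have := @hb1 (e * w) (by rw [dist_zero_right, hew]; exact hw.trans_le (min_le_left _ _))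
    rw [hew] at this
    refine le_trans ?_ this
    refine le_trans (le_of_eq ?_) (Complex.abs_re_le_norm _)
    congr 1
    rw [smul_eq_mul, show e * w * c = (‖c‖ : ℂ) * w by rw [← hce]; ring]
    simp [h0]
  refine ⟨e, min η₁ η₂, hne, lt_min hη₁ hη₂, ?_, ?_, ?_⟩
  · intro w hw
    apply hb2
    simp only [mem_ball, dist_self_add_left, norm_mul, hne, one_mul]
    exact hw.trans_le (min_le_right _ _)
  · intro w hw0 hw h
    have := (abs_le.1 (key w hw)).1
    nlinarith [mul_pos hcn hw0]
  · intro w hw0 hw h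
    have := (abs_le.1 (key w hw)).2
    nlinarith [mul_pos hcn hw0]

lemma aux_no_pair {f : ℂ → ℂ} (hf : AnalyticOnNhd ℂ f (ball 0 1)) {z₁ z₂ e₁ e₂ : ℂ} {η₁ η₂ t : ℝ}
    (h₁ : AuxCone f z₁ e₁ η₁) (h₂ : AuxCone f z₂ e₂ η₂) (hne : z₁ ≠ z₂)
    (hf₁ : (f z₁).re = 0) (hf₂ : (f z₂).re = 0) (ht₁ : (f z₁).im = t) (ht₂ : (f z₂).im = t)
    (hd : deriv f z₁ ≠ 0)
    {P N : Set ℂ} (hPc : IsCompact P) (hNc : IsCompact N)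
    (hPp : IsPreconnected P) (hNp : IsPreconnected N)
    (hP : ∀ z ∈ P, z ∈ ball (0:ℂ) 1 ∧ 0 < (f z).re) (hN : ∀ z ∈ N, z ∈ ball (0:ℂ) 1 ∧ (f z).re < 0)
    (hP1 : z₁ + e₁ * ((η₁ / 2 : ℝ) : ℂ) ∈ P) (hP2 : z₂ + e₂ * ((η₂ / 2 : ℝ) : ℂ) ∈ P)
    (hN1 : z₁ + e₁ * ((-(η₁ / 2) : ℝ) : ℂ) ∈ N) (hN2 : z₂ + e₂ * ((-(η₂ / 2) : ℝ) : ℂ) ∈ N) :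
    False := by
  have hη₁ := h₁.pos
  have hη₂ := h₂.pos
  have he₁ : e₁ ≠ 0 := by intro h; have := h₁.norm_e; simp [h] at this
  have he₂ : e₂ ≠ 0 := by intro h; have := h₂.norm_e; simp [h] at this
  set ℓ₁ : ℝ → ℂ := fun s => z₁ + e₁ * (s : ℂ) with hℓ₁
  set ℓ₂ : ℝ → ℂ := fun s => z₂ + e₂ * (s : ℂ) with hℓ₂
  have hc₁ : Continuous ℓ₁ := by fun_prop
  have hc₂ : Continuous ℓ₂ := by fun_prop
  set S₁ := ℓ₁ '' Set.Icc (-(η₁/2)) (η₁/2) with hS₁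
  set S₂ := ℓ₂ '' Set.Icc (-(η₂/2)) (η₂/2) with hS₂
  -- sign along segments
  have hsgn : ∀ {z e : ℂ} {η : ℝ}, AuxCone f z e η → ∀ s : ℝ, s ∈ Set.Icc (-(η/2)) (η/2) →
      z + e * s ∈ ball (0:ℂ) 1 ∧ (s ≠ 0 → (f (z + e * s)).re ≠ 0) := by
    intro z e η h s hs
    have hη := h.pos
    have hsn : ‖(s:ℂ)‖ < η := by
      rw [Complex.norm_real, Real.norm_eq_abs, abs_lt]
      constructor <;> linarith [hs.1, hs.2]
    refine ⟨h.mem _ hsn, fun hs0 => ?_⟩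
    rcases lt_or_gt_of_ne hs0 with h' | h'
    · exact (h.down s (by simpa using hs0) hsn (by
        rw [Complex.norm_real, Real.norm_eq_abs, abs_of_neg h', Complex.ofReal_re]; linarith)).ne
    · exact (h.up s (by simpa using hs0) hsn (by
        rw [Complex.norm_real, Real.norm_eq_abs, abs_of_pos h', Complex.ofReal_re]; linarith)).ne'
  set Q := P ∪ S₂ ∪ N with hQ
  have hS₁c : IsCompact S₁ := isCompact_Icc.image hc₁
  have hS₂c : IsCompact S₂ := isCompact_Icc.image hc₂
  have hQc : IsCompact Q := (hPc.union hS₂c).union hNc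
  set K := S₁ ∪ Q with hK
  have hKc : IsCompact K := hS₁c.union hQc
  have hz₁Q : z₁ ∉ Q := by
    rintro ((h | ⟨s, hs, h⟩) | h)
    · exact (hP _ h).2.ne' hf₁
    · by_cases hs0 : s = 0
      · apply hne; rw [← h, hs0]; simp [hℓ₂]
      · apply (hsgn h₂ s hs).2 hs0
        simp only [hℓ₂] at h
        rw [h, hf₁]
    · exact (hN _ h).2.ne hf₁
  have hKb : K ⊆ ball 0 1 := by
    rintro z (⟨s, hs, rfl⟩ | ((h | ⟨s, hs, rfl⟩) | h))
    · exact (hsgn h₁ s hs).1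
    · exact (hP _ h).1
    · exact (hsgn h₂ s hs).1
    · exact (hN _ h).1
  have hKt : ∀ z ∈ K, (f z).re = 0 → (f z).im = t := by
    rintro z (⟨s, hs, rfl⟩ | ((h | ⟨s, hs, rfl⟩) | h)) hre
    · by_cases hs0 : s = 0
      · rw [hs0]; simpa [hℓ₁] using ht₁
      · exact absurd hre ((hsgn h₁ s hs).2 hs0)
    · exact absurd hre (hP _ h).2.ne'
    · by_cases hs0 : s = 0
      · rw [hs0]; simpa [hℓ₂] using ht₂
      · exact absurd hre ((hsgn h₂ s hs).2 hs0)
    · exact absurd hre (hN _ h).2.ne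
  obtain ⟨ρ₀, hρ₀, hρQ⟩ := Metric.mem_nhds_iff.1 (hQc.isClosed.isOpen_compl.mem_nhds hz₁Q)
  set ρ := min ρ₀ (η₁/2) with hρ
  have hρpos : 0 < ρ := lt_min hρ₀ (by linarith)
  have hρη : ρ ≤ η₁/2 := min_le_right _ _
  have hnear : ∀ w : ℂ, ‖w‖ < ρ → z₁ + e₁ * w ∈ K → w.im = 0 := by
    intro w hw hmem
    rcases hmem with ⟨s, hs, h⟩ | h
    · simp only [hℓ₁] at h
      have : (s : ℂ) = w := mul_left_cancel₀ he₁ (add_left_cancel h)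
      rw [← this]; simp
    · exfalso
      refine hρQ (?_ : z₁ + e₁ * w ∈ ball z₁ ρ₀) h
      simp only [mem_ball, dist_self_add_left, norm_mul, h₁.norm_e, one_mul]
      exact hw.trans_le (min_le_left _ _)
  set ε := ρ / 4 with hε
  have hεpos : 0 < ε := by positivity
  -- connectedness
  have hconn : IsPreconnected (K \ {z₁}) := by
    have A1 : IsPreconnected (ℓ₁ '' Set.Ioc 0 (η₁/2)) := isPreconnected_Ioc.image _ hc₁.continuousOn
    have A2 : IsPreconnected (ℓ₁ '' Set.Ico (-(η₁/2)) 0) := isPreconnected_Ico.image _ hc₁.continuousOn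
    have A3 : IsPreconnected S₂ := isPreconnected_Icc.image _ hc₂.continuousOn
    have m1 : ℓ₁ (η₁/2) ∈ ℓ₁ '' Set.Ioc 0 (η₁/2) := ⟨_, ⟨by linarith, le_rfl⟩, rfl⟩
    have m2 : ℓ₂ (η₂/2) ∈ S₂ := ⟨_, ⟨by linarith, le_rfl⟩, rfl⟩
    have m3 : ℓ₂ (-(η₂/2)) ∈ S₂ := ⟨_, ⟨le_rfl, by linarith⟩, rfl⟩
    have m4 : ℓ₁ (-(η₁/2)) ∈ ℓ₁ '' Set.Ico (-(η₁/2)) 0 := ⟨_, ⟨le_rfl, by linarith⟩, rfl⟩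
    have B1 := IsPreconnected.union (ℓ₁ (η₁/2)) m1 hP1 A1 hPp
    have B2 := IsPreconnected.union (ℓ₂ (η₂/2)) (Or.inr hP2) m2 B1 A3
    have B3 := IsPreconnected.union (ℓ₂ (-(η₂/2))) (Or.inr m3) hN2 B2 hNp
    have B4 := IsPreconnected.union (ℓ₁ (-(η₁/2))) (Or.inr hN1) m4 B3 A2
    convert B4 using 1
    ext z
    constructor
    · rintro ⟨⟨s, hs, rfl⟩ | ((h | h) | h), hz⟩
      · rcases lt_trichotomy s 0 with h | h | h
        · exact Or.inr ⟨s, ⟨hs.1, h⟩, rfl⟩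
        · exfalso; apply hz; rw [h]; simp [hℓ₁]
        · exact Or.inl (Or.inl (Or.inl (Or.inl ⟨s, ⟨h, hs.2⟩, rfl⟩)))
      · exact Or.inl (Or.inl (Or.inl (Or.inr h)))
      · exact Or.inl (Or.inl (Or.inr h))
      · exact Or.inl (Or.inr h)
    · have hQ' : ∀ z ∈ Q, z ∈ K \ {z₁} := fun z hz =>
        ⟨Or.inr hz, fun h => hz₁Q (by rw [Set.mem_singleton_iff] at h; rwa [h] at hz)⟩
      have hnz : ∀ s : ℝ, s ≠ 0 → ℓ₁ s ∉ ({z₁} : Set ℂ) := by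
        intro s hs
        simp [hℓ₁, he₁, hs]
      rintro ((((⟨s, hs, rfl⟩ | h) | h) | h) | ⟨s, hs, rfl⟩)
      · exact ⟨Or.inl ⟨s, ⟨by linarith [hs.1], hs.2⟩, rfl⟩, hnz s hs.1.ne'⟩
      · exact hQ' _ (Or.inl (Or.inl h))
      · exact hQ' _ (Or.inl (Or.inr h))
      · exact hQ' _ (Or.inr h)
      · exact ⟨Or.inl ⟨s, ⟨hs.1, by linarith [hs.2]⟩, rfl⟩, hnz s hs.2.ne⟩
  have hsegK : ∀ s : ℝ, |s| < ρ → z₁ + e₁ * s ∈ K := by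
    intro s hs
    rw [abs_lt] at hs
    exact Or.inl ⟨s, ⟨by linarith [hs.1], by linarith [hs.2]⟩, rfl⟩
  have hz₁K : z₁ ∈ K := by simpa using hsegK 0 (by simpa using hρpos)
  have hmeet : ∀ w : ℂ, z₁ + e₁ * w ∈ K → w.re = 0 → |w.im| ≤ ε → w = 0 := by
    intro w hw hre him
    have hn : ‖w‖ < ρ := by
      have := Complex.norm_le_abs_re_add_abs_im w
      rw [hre, abs_zero] at this
      linarith
    exact Complex.ext hre (hnear w hn hw)
  obtain ⟨R, ⟨hR0, hR1⟩, hKR⟩ := _root_.exists_pos_lt_subset_ball one_pos hKc.isClosed hKb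
  -- the two sides
  have hside : ∀ σ : ℝ, |σ| = ε →
      ∃ y : ℂ, y ∉ closedBall (0:ℂ) R ∧ y ∈ connectedComponentIn Kᶜ (z₁ + e₁ * (σ * Complex.I)) := by
    intro σ hσ
    by_contra hcon
    push Not at hcon
    set a := z₁ + e₁ * (σ * Complex.I) with ha
    set V := connectedComponentIn Kᶜ a with hV
    have hVo : IsOpen V := hKc.isClosed.isOpen_compl.connectedComponentIn
    have hVR : V ⊆ closedBall 0 R := by
      intro y hy
      by_contra h
      exact hcon y h hy
    have hVK : V ⊆ Kᶜ := connectedComponentIn_subset _ _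
    have hfr : closure V \ V ⊆ K := by
      rintro x ⟨hx, hxV⟩
      by_contra hxK
      have hxo : IsOpen (connectedComponentIn Kᶜ x) := hKc.isClosed.isOpen_compl.connectedComponentIn
      have hxm : x ∈ connectedComponentIn Kᶜ x := mem_connectedComponentIn hxK
      obtain ⟨y, hy1, hy2⟩ := mem_closure_iff.1 hx _ hxo hxm
      have e1 := connectedComponentIn_eq hy1
      have e2 := connectedComponentIn_eq hy2
      rw [hV, e2, ← e1] at hxV
      exact hxV hxm
    -- horizontal segment through a
    set m : ℝ → ℂ := fun s => z₁ + e₁ * (s + σ * Complex.I) with hm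
    have hmc : Continuous m := by fun_prop
    have hwn : ∀ s ∈ Set.Icc (-ε) ε, ‖(s + σ * Complex.I : ℂ)‖ ≤ 2 * ε := by
      intro s hs
      have := Complex.norm_le_abs_re_add_abs_im (s + σ * Complex.I : ℂ)
      simp at this
      have h2 := abs_le.2 hs
      linarith
    have hmK : m '' Set.Icc (-ε) ε ⊆ Kᶜ := by
      rintro _ ⟨s, hs, rfl⟩ hk
      have := hnear _ (by linarith [hwn s hs]) hk
      simp at this
      rw [this] at hσ
      simp at hσ; linarith
    have hmV : m '' Set.Icc (-ε) ε ⊆ V := by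
      apply IsPreconnected.subset_connectedComponentIn (isPreconnected_Icc.image _ hmc.continuousOn) _ hmK
      exact ⟨0, ⟨by linarith, by linarith⟩, by simp [hm, ha]⟩
    have hσ0 : σ ≠ 0 := by rintro rfl; simp at hσ; linarith
    have hpos : 0 < (f (m ε)).re := by
      apply h₁.up
      · rw [norm_pos_iff]
        intro h
        have := congrArg Complex.im h
        simp at this
        exact hσ0 this
      · linarith [hwn ε ⟨by linarith, le_rfl⟩]
      · have := hwn ε ⟨by linarith, le_rfl⟩
        simpa using this
    have hneg : (f (m (-ε))).re < 0 := by
      apply h₁.down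
      · rw [norm_pos_iff]
        intro h
        have := congrArg Complex.im h
        simp at this
        exact hσ0 this
      · linarith [hwn (-ε) ⟨le_rfl, by linarith⟩]
      · have := hwn (-ε) ⟨le_rfl, by linarith⟩
        simpa using this
    have hVb : V ⊆ ball 0 1 := hVR.trans (closedBall_subset_ball hR1)
    have hcf : ContinuousOn (fun s => (f (m s)).re) (Set.Icc (-ε) ε) := by
      apply Complex.continuous_re.comp_continuousOn
      apply (hf.continuousOn.mono hVb).comp hmc.continuousOn
      intro s hs
      exact hmV ⟨s, hs, rfl⟩
    obtain ⟨s, hs, hs0⟩ := intermediate_value_Icc (by linarith : -ε ≤ ε) hcf ⟨hneg.le, hpos.le⟩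
    exact aux_maxprin hf hR1 hVo hVR hfr hKt (hmV ⟨s, hs, rfl⟩) hs0 (hKb hz₁K) hd
  obtain ⟨y₁, hy₁, hy₁'⟩ := hside ε (abs_of_pos hεpos)
  obtain ⟨y₂, hy₂, hy₂'⟩ := hside (-ε) (by rw [abs_neg, abs_of_pos hεpos])
  have hout : y₂ ∈ connectedComponentIn Kᶜ y₁ := by
    apply IsPreconnected.subset_connectedComponentIn (aux_compl_closedBall hR0) hy₁ _ hy₂
    intro z hz hzK
    exact hz (ball_subset_closedBall (hKR hzK))
  have ea : ∀ σ : ℝ, |σ| = ε → z₁ + e₁ * (σ * Complex.I) ∈ Kᶜ := by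
    intro σ hσ hk
    have := hmeet _ hk (by simp) (by simp [hσ])
    have := congrArg Complex.im this
    simp at this
    rw [this] at hσ; simp at hσ; linarith
  have e1 := connectedComponentIn_eq hy₁'
  have e2 := connectedComponentIn_eq hy₂'
  have e3 := connectedComponentIn_eq hout
  refine aux_sep hKc he₁ hεpos hρpos hz₁K hsegK hconn hmeet
    (V := connectedComponentIn Kᶜ y₁) isPreconnected_connectedComponentIn ?_ ?_ ?_
  · exact Set.disjoint_left.2 fun z hz hzK => connectedComponentIn_subset _ _ hz hzK
  · rw [← e1]; exact mem_connectedComponentIn (ea ε (abs_of_pos hεpos))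
  · rw [e3, ← e2]
    have := mem_connectedComponentIn (ea (-ε) (by rw [abs_neg, abs_of_pos hεpos]))
    convert this using 2
    push_cast; ring

lemma aux_path {f : ℂ → ℂ} (hf : AnalyticOnNhd ℂ f (ball 0 1)) {x y : ℂ}
    (hx : x ∈ {z | z ∈ ball (0:ℂ) 1 ∧ (f z).re ≠ 0})
    (hy : y ∈ {z | z ∈ ball (0:ℂ) 1 ∧ (f z).re ≠ 0})
    (hxy : connectedComponentIn {z | z ∈ ball (0:ℂ) 1 ∧ (f z).re ≠ 0} x =
      connectedComponentIn {z | z ∈ ball (0:ℂ) 1 ∧ (f z).re ≠ 0} y) :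
    ∃ P : Set ℂ, IsCompact P ∧ IsPreconnected P ∧ x ∈ P ∧ y ∈ P ∧
      P ⊆ {z | z ∈ ball (0:ℂ) 1 ∧ (f z).re ≠ 0} := by
  set S := {z | z ∈ ball (0:ℂ) 1 ∧ (f z).re ≠ 0} with hS
  have hSo : IsOpen S := by
    have h1 : ContinuousOn (fun z => (f z).re) (ball (0:ℂ) 1) :=
      Complex.continuous_re.comp_continuousOn hf.continuousOn
    exact h1.isOpen_inter_preimage isOpen_ball (isOpen_compl_singleton (x := (0:ℝ)))
  have hC : IsConnected (connectedComponentIn S x) := isConnected_connectedComponentIn_iff.2 hx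
  have hCp : IsPathConnected (connectedComponentIn S x) :=
    (hSo.connectedComponentIn.isConnected_iff_isPathConnected).1 hC
  have hyx : y ∈ connectedComponentIn S x := by rw [hxy]; exact mem_connectedComponentIn hy
  obtain ⟨γ, hγ⟩ := hCp.joinedIn x (mem_connectedComponentIn hx) y hyx
  refine ⟨Set.range γ, isCompact_range γ.continuous, isPreconnected_range γ.continuous, ⟨0, by simp⟩, ⟨1, by simp⟩, ?_⟩
  rintro _ ⟨t, rfl⟩
  exact connectedComponentIn_subset _ _ (hγ t)

lemma aux_count {f : ℂ → ℂ} (hf : AnalyticOnNhd ℂ f (ball 0 1)) {k : ℕ}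
    (hfin : (nodalComponents {z | z ∈ ball (0:ℂ) 1 ∧ (f z).re ≠ 0}).Finite)
    (hcard : (nodalComponents {z | z ∈ ball (0:ℂ) 1 ∧ (f z).re ≠ 0}).ncard ≤ k)
    (t : ℝ) (S : Finset ℂ) (hS : ∀ z ∈ S, z ∈ ball (0:ℂ) 1 ∧ f z = t * Complex.I ∧ deriv f z ≠ 0) :
    S.card ≤ k ^ 2 := by
  classical
  set Nod := {z | z ∈ ball (0:ℂ) 1 ∧ (f z).re ≠ 0} with hNod
  have hre : ∀ z ∈ S, (f z).re = 0 := fun z hz => by rw [(hS z hz).2.1]; simp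
  have him : ∀ z ∈ S, (f z).im = t := fun z hz => by rw [(hS z hz).2.1]; simp
  have hcone : ∀ z : ℂ, ∃ e : ℂ, ∃ η : ℝ, z ∈ S → AuxCone f z e η := by
    intro z
    by_cases hz : z ∈ S
    · obtain ⟨e, η, h⟩ := aux_cone_exists hf (hS z hz).1 (hre z hz) (hS z hz).2.2
      exact ⟨e, η, fun _ => h⟩
    · exact ⟨0, 0, fun h => absurd h hz⟩
  choose e η hc using hcone
  set p : ℂ → ℂ := fun z => z + e z * ((η z / 2 : ℝ) : ℂ) with hp
  set q : ℂ → ℂ := fun z => z + e z * ((-(η z / 2) : ℝ) : ℂ) with hq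
  have hpp : ∀ z ∈ S, p z ∈ ball (0:ℂ) 1 ∧ 0 < (f (p z)).re := by
    intro z hz
    have h := hc z hz
    have hη := h.pos
    have hn : ‖((η z / 2 : ℝ) : ℂ)‖ = η z / 2 := by
      rw [Complex.norm_real, Real.norm_eq_abs, abs_of_pos (by linarith)]
    refine ⟨h.mem _ (by rw [hn]; linarith), h.up _ (by rw [hn]; linarith) (by rw [hn]; linarith) ?_⟩
    rw [hn, Complex.ofReal_re]; linarith
  have hqq : ∀ z ∈ S, q z ∈ ball (0:ℂ) 1 ∧ (f (q z)).re < 0 := by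
    intro z hz
    have h := hc z hz
    have hη := h.pos
    have hn : ‖((-(η z / 2) : ℝ) : ℂ)‖ = η z / 2 := by
      rw [Complex.norm_real, Real.norm_eq_abs, abs_neg, abs_of_pos (by linarith)]
    refine ⟨h.mem _ (by rw [hn]; linarith), h.down _ (by rw [hn]; linarith) (by rw [hn]; linarith) ?_⟩
    rw [hn, Complex.ofReal_re]; linarith
  by_contra hlt
  push Not at hlt
  set T := hfin.toFinset ×ˢ hfin.toFinset with hT
  have hTc : T.card ≤ k ^ 2 := by
    rw [hT, Finset.card_product, ← Set.ncard_eq_toFinset_card _ hfin, sq]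
    exact Nat.mul_le_mul hcard hcard
  have hmap : ∀ z ∈ S, (connectedComponentIn Nod (p z), connectedComponentIn Nod (q z)) ∈ T := by
    intro z hz
    rw [hT, Finset.mem_product, Set.Finite.mem_toFinset, Set.Finite.mem_toFinset]
    exact ⟨⟨p z, ⟨(hpp z hz).1, (hpp z hz).2.ne'⟩, rfl⟩, ⟨q z, ⟨(hqq z hz).1, (hqq z hz).2.ne⟩, rfl⟩⟩
  obtain ⟨x, hx, y, hy, hxy, heq⟩ := Finset.exists_ne_map_eq_of_card_lt_of_maps_to (hTc.trans_lt hlt) hmap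
  rw [Prod.mk.injEq] at heq
  obtain ⟨P, hPc, hPp, hP1, hP2, hPs⟩ := aux_path hf ⟨(hpp x hx).1, (hpp x hx).2.ne'⟩
    ⟨(hpp y hy).1, (hpp y hy).2.ne'⟩ heq.1
  obtain ⟨N, hNc, hNp, hN1, hN2, hNs⟩ := aux_path hf ⟨(hqq x hx).1, (hqq x hx).2.ne⟩
    ⟨(hqq y hy).1, (hqq y hy).2.ne⟩ heq.2
  have hcr : ContinuousOn (fun z => (f z).re) (ball (0:ℂ) 1) :=
    Complex.continuous_re.comp_continuousOn hf.continuousOn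
  refine aux_no_pair hf (hc x hx) (hc y hy) hxy (hre x hx) (hre y hy) (him x hx) (him y hy) (hS x hx).2.2
    hPc hNc hPp hNp ?_ ?_ hP1 hP2 hN1 hN2
  · intro z hz
    refine ⟨(hPs hz).1, ?_⟩
    by_contra h
    obtain ⟨w, hw, hw0⟩ := hPp.intermediate_value hz hP1 (hcr.mono fun z hz => (hPs hz).1)
      ⟨not_lt.1 h, (hpp x hx).2.le⟩
    exact (hPs hw).2 hw0
  · intro z hz
    refine ⟨(hNs hz).1, ?_⟩
    by_contra h
    obtain ⟨w, hw, hw0⟩ := hNp.intermediate_value hN1 hz (hcr.mono fun z hz => (hNs hz).1)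
      ⟨(hqq x hx).2.le, not_lt.1 h⟩
    exact (hNs hw).2 hw0

lemma aux_factor {g : ℂ → ℂ} (hg : DifferentiableOn ℂ g (ball 0 1)) (Z : Finset ℂ)
    (hZ : ∀ z ∈ Z, z ∈ ball (0:ℂ) 1 ∧ g z = 0) :
    ∃ h : ℂ → ℂ, DifferentiableOn ℂ h (ball 0 1) ∧ ∀ z, g z = (∏ w ∈ Z, (z - w)) * h z := by
  classical
  induction Z using Finset.induction_on with
  | empty => exact ⟨g, hg, by simp⟩
  | insert a Z ha ih =>
    obtain ⟨h, hh, hgh⟩ := ih fun z hz => hZ z (Finset.mem_insert_of_mem hz)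
    have hab := hZ a (Finset.mem_insert_self _ _)
    have h0 : h a = 0 := by
      have := hgh a
      rw [hab.2] at this
      rcases mul_eq_zero.1 this.symm with h | h
      · exfalso
        obtain ⟨w, hw, hw'⟩ := Finset.prod_eq_zero_iff.1 h
        exact ha (by rwa [sub_eq_zero.1 hw'])
      · exact h
    refine ⟨dslope h a, (Complex.differentiableOn_dslope (isOpen_ball.mem_nhds hab.1)).2 hh, fun z => ?_⟩
    rw [hgh z, Finset.prod_insert ha]
    have := sub_smul_dslope h a z
    rw [h0, sub_zero, smul_eq_mul] at this
    rw [← this]; ring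

lemma aux_factor_ne {g h : ℂ → ℂ} (hh : DifferentiableOn ℂ h (ball 0 1)) (Z : Finset ℂ)
    (hgh : ∀ z, g z = (∏ w ∈ Z, (z - w)) * h z)
    (hZ : ∀ z ∈ ball (0:ℂ) 1, g z = 0 → z ∈ Z)
    (hd : ∀ z ∈ ball (0:ℂ) 1, g z = 0 → deriv g z ≠ 0) : ∀ z ∈ ball (0:ℂ) 1, h z ≠ 0 := by
  intro z hz h0
  have hg0 : g z = 0 := by rw [hgh, h0, mul_zero]
  have hzZ := hZ z hz hg0
  apply hd z hz hg0
  have hp : DifferentiableAt ℂ (fun z => ∏ w ∈ Z, (z - w)) z := by fun_prop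
  have hp0 : ∏ w ∈ Z, (z - w) = 0 := Finset.prod_eq_zero hzZ (sub_self z)
  have hh' := (hh.differentiableAt (isOpen_ball.mem_nhds hz))
  have := (hp.hasDerivAt.mul hh'.hasDerivAt)
  have e : g = (fun z => ∏ w ∈ Z, (z - w)) * h := by ext z; exact hgh z
  rw [e, this.deriv, h0, hp0]; simp

lemma aux_C0 : ∫⁻ s : ℝ, ENNReal.ofReal (-Real.log |s|) < ⊤ := by
  have h1 : ∫⁻ s : ℝ, ENNReal.ofReal (-Real.log |s|) =
      ∫⁻ s in Set.Ioc (-1:ℝ) 1, ENNReal.ofReal (-Real.log |s|) := by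
    rw [← lintegral_indicator measurableSet_Ioc]
    congr 1
    ext s
    by_cases hs : s ∈ Set.Ioc (-1:ℝ) 1
    · rw [Set.indicator_of_mem hs]
    · rw [Set.indicator_of_notMem hs]
      apply ENNReal.ofReal_of_nonpos
      have : 1 ≤ |s| := by
        by_contra h
        push Not at h
        rw [abs_lt] at h
        exact hs ⟨h.1, h.2.le⟩
      linarith [Real.log_nonneg this]
  rw [h1]
  have h2 : IntegrableOn (fun s => -Real.log s) (Set.Ioc (-1:ℝ) 1) := by
    have := (intervalIntegral.intervalIntegrable_log' (a := (-1:ℝ)) (b := 1)).neg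
    rw [intervalIntegrable_iff_integrableOn_Ioc_of_le (by norm_num)] at this
    exact this
  simp only [Real.log_abs]
  refine lt_of_le_of_lt (lintegral_mono fun s => ?_) h2.2
  rw [← ofReal_norm_eq_enorm]
  exact ENNReal.ofReal_le_ofReal (le_abs_self _)

lemma aux_choose {F : ℝ → ℂ} (hF : Continuous F) {T : Set ℝ} (hT : T.Countable) :
    ∃ t ∈ Set.Icc (0:ℝ) 1, t ∉ T ∧
      ∫⁻ φ in Set.Ioc 0 (2 * Real.pi), ENNReal.ofReal (-Real.log ‖F φ - t * Complex.I‖) ≤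
        ENNReal.ofReal (2 * Real.pi) * ∫⁻ s : ℝ, ENNReal.ofReal (-Real.log |s|) := by
  set μ := (volume : Measure ℝ).restrict (Set.Icc 0 1) with hμ
  haveI : IsProbabilityMeasure μ := ⟨by simp [hμ]⟩
  set ν := (volume : Measure ℝ).restrict (Set.Ioc 0 (2 * Real.pi)) with hν
  set G : ℝ → ℝ → ENNReal := fun t φ => ENNReal.ofReal (-Real.log ‖F φ - t * Complex.I‖) with hG
  have hmeas : Measurable (Function.uncurry G) := by
    have hF' := hF.measurable
    apply ENNReal.measurable_ofReal.comp
    apply Measurable.neg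
    apply Real.measurable_log.comp
    apply Measurable.norm
    apply Continuous.measurable
    fun_prop
  have hNull : μ (T ∪ (Set.Icc 0 1)ᶜ) = 0 := by
    apply measure_union_null
    · exact hT.measure_zero _
    · rw [hμ, Measure.restrict_apply measurableSet_Icc.compl]; simp
  have hin : ∀ φ, ∫⁻ t, G t φ ∂μ ≤ ∫⁻ s : ℝ, ENNReal.ofReal (-Real.log |s|) := by
    intro φ
    calc ∫⁻ t, G t φ ∂μ ≤ ∫⁻ t, G t φ := lintegral_mono' Measure.restrict_le_self le_rfl
      _ ≤ ∫⁻ t, ENNReal.ofReal (-Real.log |(F φ).im - t|) := by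
        apply lintegral_mono_ae
        have : ∀ᵐ t : ℝ, t ∉ ({(F φ).im} : Set ℝ) := (Set.countable_singleton _).ae_notMem _
        filter_upwards [this] with t ht
        apply ENNReal.ofReal_le_ofReal
        apply neg_le_neg
        apply Real.log_le_log
        · rw [abs_pos, sub_ne_zero]; exact fun h => ht h.symm
        · have := Complex.abs_im_le_norm (F φ - t * Complex.I)
          simpa using this
      _ = _ := lintegral_sub_left_eq_self (fun s => ENNReal.ofReal (-Real.log |s|)) _
  have htot : ∫⁻ t, ∫⁻ φ, G t φ ∂ν ∂μ ≤
      ENNReal.ofReal (2 * Real.pi) * ∫⁻ s : ℝ, ENNReal.ofReal (-Real.log |s|) := by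
    rw [lintegral_lintegral_swap hmeas.aemeasurable]
    calc _ ≤ ∫⁻ φ, (∫⁻ s : ℝ, ENNReal.ofReal (-Real.log |s|)) ∂ν := lintegral_mono hin
      _ = _ := by
        rw [lintegral_const, mul_comm, hν, Measure.restrict_apply_univ, Real.volume_Ioc, sub_zero]
  obtain ⟨t, ht, hle⟩ := exists_notMem_null_le_lintegral (μ := μ) (f := fun t => ∫⁻ φ, G t φ ∂ν)
    (Measurable.lintegral_prod_right' hmeas).aemeasurable hNull
  rw [Set.mem_union, not_or, Set.notMem_compl_iff] at ht
  exact ⟨t, ht.2, ht.1, hle.trans htot⟩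

lemma aux_poisson {v : ℂ → ℝ} {r : ℝ} (hv : InnerProductSpace.HarmonicOnNhd v (closedBall 0 r))
    {w : ℂ} (hw : w ∈ ball (0:ℂ) r) {κ : ℝ} (hκ : (r + ‖w‖) / (r - ‖w‖) ≤ κ) :
    v w ≤ κ * Real.circleAverage (fun z => max (v z) 0) 0 r := by
  have hr : 0 < r := pos_of_mem_ball hw
  have hwn : ‖w‖ < r := by simpa using hw
  rw [← hv.circleAverage_re_herglotzRieszKernel_smul hw]
  have hvc : ContinuousOn v (sphere 0 |r|) := by
    rw [abs_of_pos hr]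
    exact hv.continuousOn.mono sphere_subset_closedBall
  have hm : ContinuousOn (fun z => max (v z) 0) (sphere 0 |r|) := hvc.sup continuousOn_const
  have hk : ContinuousOn (Complex.re ∘ herglotzRieszKernel 0 w) (sphere 0 |r|) :=
    Complex.continuous_re.comp_continuousOn (continuousOn_herglotzRieszKernel_sphere hw)
  have : κ * Real.circleAverage (fun z => max (v z) 0) 0 r =
      Real.circleAverage (fun z => κ • max (v z) 0) 0 r := by
    rw [Real.circleAverage_fun_smul, smul_eq_mul]
  rw [this]
  apply Real.circleAverage_mono
  · exact (hk.smul hvc).circleIntegrable'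
  · exact (hm.const_smul κ).circleIntegrable'
  · intro z hz
    rw [abs_of_pos hr] at hz
    have h1 := re_herglotzRieszKernel_le hz hw
    have h2 := le_re_herglotzRieszKernel hz hw
    rw [sub_zero w] at h1 h2
    have h3 : 0 ≤ (r - ‖w‖) / (r + ‖w‖) := div_nonneg (by linarith) (by positivity)
    have e : (Complex.re ∘ herglotzRieszKernel 0 w) z = ((z - 0 + w) / (z - 0 - w)).re := by
      simp [herglotzRieszKernel_def]
    simp only [Pi.smul_apply', smul_eq_mul]
    rw [e]
    have hk0 := h3.trans h2
    calc _ ≤ ((z - 0 + w) / (z - 0 - w)).re * max (v z) 0 := mul_le_mul_of_nonneg_left (le_max_left _ _) hk0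
      _ ≤ _ := mul_le_mul_of_nonneg_right (h1.trans hκ) (le_max_right _ _)

lemma aux_AL1 {g h : ℂ → ℂ} (hh : DifferentiableOn ℂ h (ball 0 1)) (Z : Finset ℂ)
    (hgh : ∀ z, g z = (∏ w ∈ Z, (z - w)) * h z) (hne : ∀ z ∈ ball (0:ℂ) 1, h z ≠ 0)
    {δ : ℝ} (hδ : 0 < δ) (hδ1 : δ < 1) (hb : ∀ z ∈ sphere (0:ℂ) δ, ‖g z‖ ≤ 2) {p : ℕ} (hp : Z.card ≤ p) :
    Real.log ‖h 0‖ ≤ Real.log 2 + p * (-Real.log δ) := by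
  have hsub : closedBall (0:ℂ) |δ| ⊆ ball 0 1 := by
    rw [abs_of_pos hδ]; exact closedBall_subset_ball hδ1
  have han : AnalyticOnNhd ℂ h (closedBall 0 |δ|) := (hh.analyticOnNhd isOpen_ball).mono hsub
  have hne' : ∀ z ∈ closedBall (0:ℂ) |δ|, h z ≠ 0 := fun z hz => hne z (hsub hz)
  have e1 := AnalyticOnNhd.circleAverage_log_norm_of_ne_zero han hne'
  have hhc : CircleIntegrable (Real.log ‖h ·‖) 0 δ := by
    apply ContinuousOn.circleIntegrable'
    apply ContinuousOn.log
    · exact (han.continuousOn.mono sphere_subset_closedBall).norm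
    · intro z hz
      exact norm_ne_zero_iff.2 (hne' z (sphere_subset_closedBall hz))
  have hwc : ∀ w ∈ Z, CircleIntegrable (fun z => Real.log ‖z - w‖) 0 δ := fun w _ =>
    circleIntegrable_log_norm_sub_const δ
  have hsum : CircleIntegrable (fun z => ∑ w ∈ Z, Real.log ‖z - w‖) 0 δ := by
    simpa using CircleIntegrable.fun_sum Z hwc
  have e2 : Real.circleAverage (fun z => Real.log ‖h z‖ + ∑ w ∈ Z, Real.log ‖z - w‖) 0 δ =
      Real.log ‖h 0‖ + ∑ w ∈ Z, Real.circleAverage (fun z => Real.log ‖z - w‖) 0 δ := by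
    rw [Real.circleAverage_fun_add hhc hsum, e1, Real.circleAverage_fun_sum hwc]
  have hae : ∀ᵐ φ : ℝ, circleMap 0 δ φ ∉ (Z : Set ℂ) :=
    ((Z.countable_toSet).preimage_circleMap 0 hδ.ne').ae_notMem _
  have e3 : Real.circleAverage (fun z => Real.log ‖h z‖ + ∑ w ∈ Z, Real.log ‖z - w‖) 0 δ ≤ Real.log 2 := by
    rw [Real.circleAverage_def, smul_eq_mul, inv_mul_le_iff₀ Real.two_pi_pos]
    have hc2 : (2 * Real.pi) * Real.log 2 = ∫ _φ in (0:ℝ)..(2 * Real.pi), Real.log 2 := by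
      simp
    rw [hc2]
    apply intervalIntegral.integral_mono_ae Real.two_pi_pos.le (hhc.add hsum) (by simp)
    filter_upwards [hae] with φ hφ
    set z := circleMap 0 δ φ with hz
    have hzs : z ∈ sphere (0:ℂ) δ := circleMap_mem_sphere 0 hδ.le φ
    have hzb : z ∈ ball (0:ℂ) 1 := hsub (by rw [abs_of_pos hδ]; exact sphere_subset_closedBall hzs)
    have hzw : ∀ w ∈ Z, ‖z - w‖ ≠ 0 := by
      intro w hw h
      rw [norm_eq_zero, sub_eq_zero] at h
      exact hφ (by rw [h]; exact hw)
    have hlog : Real.log ‖g z‖ = Real.log ‖h z‖ + ∑ w ∈ Z, Real.log ‖z - w‖ := by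
      rw [hgh, norm_mul, norm_prod, Real.log_mul (Finset.prod_ne_zero_iff.2 hzw) (norm_ne_zero_iff.2 (hne z hzb)),
        Real.log_prod hzw, add_comm]
    show Real.log ‖h z‖ + ∑ w ∈ Z, Real.log ‖z - w‖ ≤ Real.log 2
    rw [← hlog]
    by_cases hg0 : g z = 0
    · rw [hg0]; simp; exact Real.log_nonneg (by norm_num)
    · exact Real.log_le_log (norm_pos_iff.2 hg0) (hb z hzs)
  have e4 : ∀ w ∈ Z, Real.log δ ≤ Real.circleAverage (fun z => Real.log ‖z - w‖) 0 δ := by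
    intro w _
    rw [circleAverage_log_norm_sub_const_eq_log_radius_add_posLog hδ.ne']
    linarith [Real.posLog_nonneg (x := δ⁻¹ * ‖(0:ℂ) - w‖)]
  have e5 := Finset.card_nsmul_le_sum Z _ _ e4
  rw [nsmul_eq_mul] at e5
  have hld : Real.log δ < 0 := Real.log_neg hδ hδ1
  have hpc : (Z.card : ℝ) ≤ p := by exact_mod_cast hp
  nlinarith

lemma aux_AL2 {g h : ℂ → ℂ} (hh : DifferentiableOn ℂ h (ball 0 1)) (Z : Finset ℂ)
    (hgh : ∀ z, g z = (∏ w ∈ Z, (z - w)) * h z) (hne : ∀ z ∈ ball (0:ℂ) 1, h z ≠ 0)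
    (hZb : ∀ w ∈ Z, w ∈ ball (0:ℂ) 1)
    {r : ℝ} (hr : 0 < r) (hr1 : r < 1) {p : ℕ} (hp : Z.card ≤ p) {C : ℝ} (hC0 : 0 ≤ C)
    (hC : ∫⁻ φ in Set.Ioc 0 (2 * Real.pi), ENNReal.ofReal (-Real.log ‖g (circleMap 0 r φ)‖) ≤
        ENNReal.ofReal (2 * Real.pi) * ENNReal.ofReal C) :
    Real.circleAverage (fun z => max (Real.log ‖h z‖) 0) 0 r ≤ Real.log ‖h 0‖ + p * Real.log 2 + C := by
  have hsub : closedBall (0:ℂ) |r| ⊆ ball 0 1 := by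
    rw [abs_of_pos hr]; exact closedBall_subset_ball hr1
  have han : AnalyticOnNhd ℂ h (closedBall 0 |r|) := (hh.analyticOnNhd isOpen_ball).mono hsub
  have hne' : ∀ z ∈ closedBall (0:ℂ) |r|, h z ≠ 0 := fun z hz => hne z (hsub hz)
  have e1 := AnalyticOnNhd.circleAverage_log_norm_of_ne_zero han hne'
  have hvc : ContinuousOn (fun z => Real.log ‖h z‖) (sphere 0 |r|) := by
    apply ContinuousOn.log
    · exact (han.continuousOn.mono sphere_subset_closedBall).norm
    · intro z hz
      exact norm_ne_zero_iff.2 (hne' z (sphere_subset_closedBall hz))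
  have hnc : ContinuousOn (fun z => max (-Real.log ‖h z‖) 0) (sphere 0 |r|) := hvc.neg.sup continuousOn_const
  have hsplit : Real.circleAverage (fun z => max (Real.log ‖h z‖) 0) 0 r =
      Real.log ‖h 0‖ + Real.circleAverage (fun z => max (-Real.log ‖h z‖) 0) 0 r := by
    rw [← e1, ← Real.circleAverage_fun_add hvc.circleIntegrable' hnc.circleIntegrable']
    congr 1
    ext z
    rcases le_total 0 (Real.log ‖h z‖) with h | h
    · rw [max_eq_left h, max_eq_right (by linarith)]; ring
    · rw [max_eq_right h, max_eq_left (by linarith)]; ring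
  rw [hsplit, add_assoc]
  apply add_le_add_right
  have hae : ∀ᵐ φ : ℝ, circleMap 0 r φ ∉ (Z : Set ℂ) :=
    ((Z.countable_toSet).preimage_circleMap 0 hr.ne').ae_notMem _
  have hl2 : 0 ≤ Real.log 2 := Real.log_nonneg (by norm_num)
  rw [Real.circleAverage_def, smul_eq_mul, inv_mul_le_iff₀ Real.two_pi_pos,
    intervalIntegral.integral_of_le Real.two_pi_pos.le, integral_eq_lintegral_of_nonneg_ae
      (f := fun φ => max (-Real.log ‖h (circleMap 0 r φ)‖) 0)
      (ae_of_all _ fun φ => le_max_right _ _)]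
  · apply ENNReal.toReal_le_of_le_ofReal (by positivity)
    calc ∫⁻ φ in Set.Ioc 0 (2 * Real.pi), ENNReal.ofReal (max (-Real.log ‖h (circleMap 0 r φ)‖) 0)
        ≤ ∫⁻ φ in Set.Ioc 0 (2 * Real.pi), (ENNReal.ofReal (p * Real.log 2) +
            ENNReal.ofReal (-Real.log ‖g (circleMap 0 r φ)‖)) := by
          apply lintegral_mono_ae
          filter_upwards [ae_restrict_of_ae hae] with φ hφ
          set z := circleMap 0 r φ with hz
          have hzs : z ∈ sphere (0:ℂ) r := circleMap_mem_sphere 0 hr.le φ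
          have hzb : z ∈ ball (0:ℂ) 1 := hsub (by rw [abs_of_pos hr]; exact sphere_subset_closedBall hzs)
          have hzw : ∀ w ∈ Z, ‖z - w‖ ≠ 0 := by
            intro w hw h
            rw [norm_eq_zero, sub_eq_zero] at h
            exact hφ (by rw [h]; exact hw)
          have hlog : Real.log ‖g z‖ = ∑ w ∈ Z, Real.log ‖z - w‖ + Real.log ‖h z‖ := by
            rw [hgh, norm_mul, norm_prod, Real.log_mul (Finset.prod_ne_zero_iff.2 hzw) (norm_ne_zero_iff.2 (hne z hzb)),
              Real.log_prod hzw]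
          have hle : ∀ w ∈ Z, Real.log ‖z - w‖ ≤ Real.log 2 := by
            intro w hw
            apply Real.log_le_log ((norm_nonneg _).lt_of_ne' (hzw w hw))
            have h1 := norm_sub_le z w
            have h2 : ‖z‖ < 1 := by simpa using hzb
            have h3 : ‖w‖ < 1 := by simpa using hZb w hw
            linarith
          have hs := Finset.sum_le_card_nsmul Z _ _ hle
          rw [nsmul_eq_mul] at hs
          have hpc : (Z.card : ℝ) ≤ p := by exact_mod_cast hp
          have hs2 : (Z.card : ℝ) * Real.log 2 ≤ p * Real.log 2 := mul_le_mul_of_nonneg_right hpc hl2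
          have hp0 : 0 ≤ (p:ℝ) * Real.log 2 := by positivity
          rw [ENNReal.ofReal_max, ENNReal.ofReal_zero, max_eq_left zero_le]
          calc _ ≤ ENNReal.ofReal (p * Real.log 2 + -Real.log ‖g z‖) :=
                ENNReal.ofReal_le_ofReal (by linarith)
            _ ≤ _ := ENNReal.ofReal_add_le
      _ = ENNReal.ofReal (p * Real.log 2) * ENNReal.ofReal (2 * Real.pi) +
            ∫⁻ φ in Set.Ioc 0 (2 * Real.pi), ENNReal.ofReal (-Real.log ‖g (circleMap 0 r φ)‖) := by
          rw [lintegral_add_left measurable_const, lintegral_const, Measure.restrict_apply_univ,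
            Real.volume_Ioc, sub_zero]
      _ ≤ ENNReal.ofReal (p * Real.log 2) * ENNReal.ofReal (2 * Real.pi) +
            ENNReal.ofReal (2 * Real.pi) * ENNReal.ofReal C := add_le_add_right hC _
      _ = ENNReal.ofReal (2 * Real.pi * (p * Real.log 2 + C)) := by
          rw [← ENNReal.ofReal_mul (by positivity), ← ENNReal.ofReal_mul (by positivity),
            ← ENNReal.ofReal_add (by positivity) (by positivity)]
          congr 1; ring
  · apply Continuous.aestronglyMeasurable
    apply hnc.comp_continuous (continuous_circleMap 0 r)
    intro φ
    exact circleMap_mem_sphere' 0 r φ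

lemma aux_AL (p : ℕ) {δ r R : ℝ} (hδ : 0 < δ) (hδ1 : δ < 1) (hR : 0 < R) (hRr : R < r) (hr1 : r < 1) :
    ∃ M : ℝ, 0 < M ∧ ∀ (f : ℂ → ℂ) (T : Set ℝ), DifferentiableOn ℂ f (ball 0 1) → T.Countable →
      (∀ t : ℝ, t ∉ T → ∀ z ∈ ball (0:ℂ) 1, f z = t * Complex.I → deriv f z ≠ 0) →
      (∀ t : ℝ, t ∉ T → ∀ S : Finset ℂ, (∀ z ∈ S, z ∈ ball (0:ℂ) 1 ∧ f z = t * Complex.I) → S.card ≤ p) →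
      (∀ z ∈ sphere (0:ℂ) δ, ‖f z‖ ≤ 1) → ∀ z ∈ closedBall (0:ℂ) R, ‖f z‖ ≤ M := by
  set C := (∫⁻ s : ℝ, ENNReal.ofReal (-Real.log |s|)).toReal with hC
  set B := Real.log 2 + p * (-Real.log δ) + p * Real.log 2 + C with hB
  set κ := (r + R) / (r - R) with hκ
  have hr : 0 < r := hR.trans hRr
  have hκ0 : 0 ≤ κ := div_nonneg (by linarith) (by linarith)
  refine ⟨2 ^ p * Real.exp (κ * B) + 1, by positivity, ?_⟩
  intro f T hf hT hTd hTc hb z hz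
  have hsub : closedBall (0:ℂ) r ⊆ ball 0 1 := closedBall_subset_ball hr1
  have hFc : Continuous (fun φ => f (circleMap 0 r φ)) :=
    hf.continuousOn.comp_continuous (continuous_circleMap 0 r)
      fun φ => hsub (sphere_subset_closedBall (circleMap_mem_sphere 0 hr.le φ))
  obtain ⟨t, ht01, htT, hintg⟩ := aux_choose hFc hT
  set g : ℂ → ℂ := fun z => f z - t * Complex.I with hg
  have hgd : DifferentiableOn ℂ g (ball 0 1) := hf.sub_const _
  have htn : ‖(t * Complex.I : ℂ)‖ ≤ 1 := by
    simp only [norm_mul, Complex.norm_real, Complex.norm_I, mul_one, Real.norm_eq_abs]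
    rw [abs_of_nonneg ht01.1]; exact ht01.2
  have hg0 : ∀ z, g z = 0 ↔ f z = t * Complex.I := fun z => sub_eq_zero
  -- the zero set
  have hfin : {z | z ∈ ball (0:ℂ) 1 ∧ g z = 0}.Finite := by
    by_contra hinf
    obtain ⟨S, hS, hSc⟩ := Set.Infinite.exists_subset_card_eq hinf (p + 1)
    have := hTc t htT S fun z hz => ⟨(hS hz).1, (hg0 z).1 (hS hz).2⟩
    omega
  set Z := hfin.toFinset with hZ
  have hZm : ∀ z, z ∈ Z ↔ z ∈ ball (0:ℂ) 1 ∧ g z = 0 := fun z => by rw [hZ, Set.Finite.mem_toFinset]; rfl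
  have hZp : Z.card ≤ p := hTc t htT Z fun z hz => ⟨((hZm z).1 hz).1, (hg0 z).1 ((hZm z).1 hz).2⟩
  obtain ⟨h, hh, hgh⟩ := aux_factor hgd Z fun z hz => (hZm z).1 hz
  have hne := aux_factor_ne hh Z hgh (fun z hz h => (hZm z).2 ⟨hz, h⟩) (by
    intro z hz h
    rw [hg, deriv_sub_const]
    exact hTd t htT z hz ((hg0 z).1 h))
  have h1 := aux_AL1 hh Z hgh hne hδ hδ1 (by
    intro z hz
    calc ‖g z‖ ≤ ‖f z‖ + ‖(t * Complex.I : ℂ)‖ := norm_sub_le _ _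
      _ ≤ 2 := by linarith [hb z hz]) hZp
  have h2 := aux_AL2 hh Z hgh hne (fun w hw => ((hZm w).1 hw).1) hr hr1 hZp (C := C) ENNReal.toReal_nonneg (by
    rw [hC, ENNReal.ofReal_toReal aux_C0.ne]
    exact hintg)
  have hzn : ‖z‖ ≤ R := by simpa using hz
  have h3 := aux_poisson (v := fun z => Real.log ‖h z‖) (r := r) (w := z) (κ := κ)
    (fun x hx => ((hh.analyticOnNhd isOpen_ball) x (hsub hx)).harmonicAt_log_norm (hne x (hsub hx)))
    (by simp; linarith) (by
      rw [hκ, div_le_div_iff₀ (by linarith) (by linarith)]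
      nlinarith)
  have h4 : Real.log ‖h z‖ ≤ κ * B := by
    refine h3.trans (mul_le_mul_of_nonneg_left ?_ hκ0)
    linarith
  have hzb : z ∈ ball (0:ℂ) 1 := by simp; linarith
  have h5 : ‖h z‖ ≤ Real.exp (κ * B) := (Real.log_le_iff_le_exp (norm_pos_iff.2 (hne z hzb))).1 h4
  have h6 : ‖∏ w ∈ Z, (z - w)‖ ≤ 2 ^ p := by
    rw [norm_prod]
    calc ∏ w ∈ Z, ‖z - w‖ ≤ ∏ w ∈ Z, (2:ℝ) := by
          apply Finset.prod_le_prod (fun _ _ => norm_nonneg _)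
          intro w hw
          have h2 : ‖z‖ < 1 := by simpa using hzb
          have h3 : ‖w‖ < 1 := by simpa using ((hZm w).1 hw).1
          linarith [norm_sub_le z w]
      _ = 2 ^ Z.card := by simp
      _ ≤ 2 ^ p := pow_le_pow_right₀ (by norm_num) hZp
  have h7 : ‖g z‖ ≤ 2 ^ p * Real.exp (κ * B) := by
    rw [hgh, norm_mul]
    exact mul_le_mul h6 h5 (norm_nonneg _) (by positivity)
  calc ‖f z‖ = ‖g z + t * Complex.I‖ := by rw [hg]; simp
    _ ≤ ‖g z‖ + ‖(t * Complex.I : ℂ)‖ := norm_add_le _ _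
    _ ≤ _ := by linarith

lemma aux_zeros_countable {d : ℂ → ℂ} (hd : AnalyticOnNhd ℂ d (ball 0 1)) {z₀ : ℂ}
    (hz₀ : z₀ ∈ ball (0:ℂ) 1) (hne : d z₀ ≠ 0) : {z | z ∈ ball (0:ℂ) 1 ∧ d z = 0}.Countable := by
  set S := {z | z ∈ ball (0:ℂ) 1 ∧ d z = 0} with hS
  have hiso : ∀ x ∈ S, ({x} : Set ℂ) ∈ nhdsWithin x S := by
    intro x hx
    rcases (hd x hx.1).eventually_eq_zero_or_eventually_ne_zero with h | h
    · exact absurd (hd.eqOn_zero_of_preconnected_of_eventuallyEq_zero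
        (convex_ball _ _).isPreconnected hx.1 h hz₀) hne
    · rw [mem_nhdsWithin_iff_eventually]
      rw [eventually_nhdsWithin_iff] at h
      filter_upwards [h] with y hy hyS
      by_contra hyx
      exact hy hyx hyS.2
  obtain ⟨t, _, htc, hst⟩ := TopologicalSpace.countable_cover_nhdsWithin hiso
  apply htc.mono
  intro x hx
  obtain ⟨y, hy, hxy⟩ := Set.mem_iUnion₂.1 (hst hx)
  rw [Set.mem_singleton_iff] at hxy
  rwa [hxy]

lemma aux_small {f : ℂ → ℂ} (hf : AnalyticOnNhd ℂ f (ball 0 1)) (him : (f 0).im = 0) {θ : ℝ}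
    (hθ : 0 < θ) (hθ1 : θ < 1) {c : ℝ} (hc : 0 < c)
    (hs : Real.circleAverage (fun z => (f z).re ^ 2) 0 θ ≤ c ^ 2) :
    ∀ z ∈ sphere (0:ℂ) (θ / 2), ‖f z‖ ≤ 63 * c := by
  have hsub : closedBall (0:ℂ) θ ⊆ ball 0 1 := closedBall_subset_ball hθ1
  have hcont : ContinuousOn (fun z => (f z).re) (sphere 0 |θ|) := by
    rw [abs_of_pos hθ]
    exact Complex.continuous_re.comp_continuousOn
      (hf.continuousOn.mono (sphere_subset_closedBall.trans hsub))
  have hsq : ContinuousOn (fun z => (1 / (2 * c)) • (f z).re ^ 2) (sphere 0 |θ|) :=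
    (hcont.pow 2).const_smul (1 / (2 * c) : ℝ)
  have havg : Real.circleAverage (fun z => |(f z).re|) 0 θ ≤ c := by
    have h1 : Real.circleAverage (fun z => |(f z).re|) 0 θ ≤
        Real.circleAverage (fun z => (1 / (2 * c)) • (f z).re ^ 2 + c / 2) 0 θ := by
      apply Real.circleAverage_mono
      · exact hcont.abs.circleIntegrable'
      · exact (hsq.add continuousOn_const).circleIntegrable'
      · intro z _
        have : 0 ≤ (|(f z).re| - c) ^ 2 := sq_nonneg _
        rw [smul_eq_mul, ← sq_abs (f z).re, ← sub_nonneg]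
        have e : 1 / (2 * c) * |(f z).re| ^ 2 + c / 2 - |(f z).re| = (|(f z).re| - c) ^ 2 / (2 * c) := by
          field_simp; ring
        rw [e]; positivity
    have h2 : Real.circleAverage (fun z => (1 / (2 * c)) • (f z).re ^ 2 + c / 2) 0 θ =
        (1 / (2 * c)) * Real.circleAverage (fun z => (f z).re ^ 2) 0 θ + c / 2 := by
      rw [Real.circleAverage_fun_add (f₁ := fun z => (1 / (2 * c)) • (f z).re ^ 2)
        (f₂ := fun _ => c / 2) hsq.circleIntegrable'
        continuousOn_const.circleIntegrable', Real.circleAverage_const, Real.circleAverage_fun_smul, smul_eq_mul]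
    rw [h2] at h1
    have h3 : (1 / (2 * c)) * Real.circleAverage (fun z => (f z).re ^ 2) 0 θ ≤ (1 / (2 * c)) * c ^ 2 :=
      mul_le_mul_of_nonneg_left hs (by positivity)
    have e : (1 / (2 * c)) * c ^ 2 = c / 2 := by field_simp
    linarith
  have hpo : ∀ w ∈ ball (0:ℂ) (3 * θ / 4), (f w).re ≤ 7 * c := by
    intro w hw
    have hwn : ‖w‖ < 3 * θ / 4 := by simpa using hw
    have h1 := aux_poisson (v := fun z => (f z).re) (r := θ) (w := w) (κ := 7)
      (fun x hx => (hf x (hsub hx)).harmonicAt_re) (by simp; linarith) (by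
        rw [div_le_iff₀ (by linarith)]; linarith)
    refine h1.trans (mul_le_mul_of_nonneg_left (le_trans ?_ havg) (by norm_num))
    apply Real.circleAverage_mono
    · exact (hcont.sup continuousOn_const).circleIntegrable'
    · exact hcont.abs.circleIntegrable'
    · intro z _
      exact max_le (le_abs_self _) (abs_nonneg _)
  have hpo2 : -(f 0).re ≤ 7 * c := by
    have h1 := aux_poisson (v := fun z => -(f z).re) (r := θ) (w := 0) (κ := 7)
      (fun x hx => (by simpa using (hf x (hsub hx)).neg.harmonicAt_re)) (by simpa using hθ) (by
        rw [div_le_iff₀ (by simp; linarith)]; simp; linarith)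
    refine h1.trans (mul_le_mul_of_nonneg_left (le_trans ?_ havg) (by norm_num))
    apply Real.circleAverage_mono
    · exact (hcont.neg.sup continuousOn_const).circleIntegrable'
    · exact hcont.abs.circleIntegrable'
    · intro z _
      exact max_le (neg_le_abs _) (abs_nonneg _)
  have hf0 : ‖f 0‖ ≤ 7 * c := by
    have h1 := Complex.norm_le_abs_re_add_abs_im (f 0)
    rw [him, abs_zero, add_zero] at h1
    exact h1.trans (abs_le.2 ⟨by linarith, hpo 0 (by simp; linarith)⟩)
  intro z hz
  have hzn : ‖z‖ = θ / 2 := by simpa using hz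
  have hb := Complex.borelCaratheodory (f := f) (M := 7 * c) (R := 3 * θ / 4) (z := z) (by positivity)
    (hf.differentiableOn.mono (ball_subset_ball (by linarith))) (fun w hw => hpo w hw) (by linarith)
    (by simp; linarith)
  rw [hzn] at hb
  have e1 : 2 * (7 * c) * (θ / 2) / (3 * θ / 4 - θ / 2) = 28 * c := by
    rw [div_eq_iff (by linarith)]; ring
  have e2 : ‖f 0‖ * (3 * θ / 4 + θ / 2) / (3 * θ / 4 - θ / 2) = 5 * ‖f 0‖ := by
    rw [div_eq_iff (by linarith)]; ring
  rw [e1, e2] at hb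
  linarith

lemma aux_main (k : ℕ) {θ : ℝ} (hθ : 0 < θ) (hθ1 : θ < 1) :
    ∃ C : ℝ, 0 < C ∧ ∀ f : ℂ → ℂ, AnalyticOnNhd ℂ f (ball 0 1) → (f 0).im = 0 →
      (nodalComponents {z | z ∈ ball (0:ℂ) 1 ∧ (f z).re ≠ 0}).Finite →
      (nodalComponents {z | z ∈ ball (0:ℂ) 1 ∧ (f z).re ≠ 0}).ncard ≤ k →
      ∀ z ∈ ball (0:ℂ) θ, ‖deriv f z‖ ^ 2 ≤ C * Real.circleAverage (fun z => (f z).re ^ 2) 0 θ := by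
  set R := (1 + 2 * θ) / 3 with hR
  have hRθ : 0 < R - θ := by rw [hR]; linarith
  obtain ⟨M, hM, hAL⟩ := aux_AL (k ^ 2) (δ := θ / 2) (r := (2 + θ) / 3) (R := R) (by linarith) (by linarith)
    (by linarith) (by rw [hR]; linarith) (by linarith)
  refine ⟨(63 * M / (R - θ)) ^ 2, by positivity, ?_⟩
  intro f hf him hfin hcard z hz
  set s := Real.circleAverage (fun z => (f z).re ^ 2) 0 θ with hs
  have hs0 : 0 ≤ s := Real.circleAverage_nonneg_of_nonneg fun x _ => sq_nonneg _
  have hzb : z ∈ ball (0:ℂ) 1 := ball_subset_ball hθ1.le hz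
  by_cases hdz : deriv f z = 0
  · rw [hdz]; simp; positivity
  -- main bound
  have key : ∀ c : ℝ, 0 < c → s ≤ c ^ 2 → ‖deriv f z‖ ≤ 63 * M / (R - θ) * c := by
    intro c hc hsc
    have hsm := aux_small hf him hθ hθ1 hc hsc
    set A : ℝ := 63 * c with hA
    have hApos : 0 < A := by positivity
    have hAc : ((A⁻¹ : ℝ) : ℂ) ≠ 0 := by exact_mod_cast (inv_pos.2 hApos).ne'
    set F : ℂ → ℂ := fun z => ((A⁻¹ : ℝ) : ℂ) * f z with hF
    have hFan : AnalyticOnNhd ℂ F (ball 0 1) := fun x hx => analyticAt_const.mul (hf x hx)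
    have hFre : ∀ x, (F x).re = A⁻¹ * (f x).re := fun x => by rw [hF]; simp only [Complex.re_ofReal_mul]
    have hFset : {z | z ∈ ball (0:ℂ) 1 ∧ (F z).re ≠ 0} = {z | z ∈ ball (0:ℂ) 1 ∧ (f z).re ≠ 0} := by
      ext x
      simp only [Set.mem_ofPred_eq, hFre, mul_ne_zero_iff, ne_eq, (inv_pos.2 hApos).ne', not_false_eq_true, true_and]
    have hFd : ∀ x, deriv F x = ((A⁻¹ : ℝ) : ℂ) * deriv f x := fun x => deriv_const_mul_field _
    set T : Set ℝ := (fun x => (F x).im) '' {x | x ∈ ball (0:ℂ) 1 ∧ deriv f x = 0} with hT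
    have hTc : T.Countable := (aux_zeros_countable hf.deriv hzb hdz).image _
    have hTd : ∀ t : ℝ, t ∉ T → ∀ x ∈ ball (0:ℂ) 1, F x = t * Complex.I → deriv F x ≠ 0 := by
      intro t ht x hx hFx h0
      apply ht
      rw [hFd, mul_eq_zero] at h0
      exact ⟨x, ⟨hx, h0.resolve_left hAc⟩, by simp [hFx]⟩
    have hB := hAL F T hFan.differentiableOn hTc hTd (by
      intro t ht S hS
      exact aux_count hFan (by rw [hFset]; exact hfin) (by rw [hFset]; exact hcard) t S
        fun x hx => ⟨(hS x hx).1, (hS x hx).2, hTd t ht x (hS x hx).1 (hS x hx).2⟩) (by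
      intro x hx
      rw [hF]
      simp only [norm_mul, Complex.norm_real, Real.norm_eq_abs, abs_of_pos (inv_pos.2 hApos)]
      rw [inv_mul_le_iff₀ hApos, mul_one]
      exact hsm x hx)
    have hfB : ∀ x ∈ closedBall (0:ℂ) R, ‖f x‖ ≤ A * M := by
      intro x hx
      have := hB x hx
      rw [hF] at this
      simp only [norm_mul, Complex.norm_real, Real.norm_eq_abs, abs_of_pos (inv_pos.2 hApos)] at this
      rwa [inv_mul_le_iff₀ hApos] at this
    have hzn : ‖z‖ < θ := by simpa using hz
    have hcb : closedBall z (R - θ) ⊆ closedBall 0 R := by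
      intro x hx
      rw [mem_closedBall, dist_eq_norm] at hx
      rw [mem_closedBall, dist_zero_right]
      have := norm_le_norm_sub_add x z
      linarith
    have hcb1 : closedBall z (R - θ) ⊆ ball 0 1 :=
      hcb.trans (closedBall_subset_ball (by rw [hR]; linarith))
    have := Complex.norm_deriv_le_of_forall_mem_sphere_norm_le hRθ (C := A * M) (f := f) (c := z)
      ((hf.differentiableOn.mono hcb1).diffContOnCl_ball subset_rfl)
      (fun x hx => hfB x (hcb (sphere_subset_closedBall hx)))
    refine this.trans (le_of_eq ?_)
    rw [hA]; ring
  apply le_of_forall_pos_le_add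
  intro ε hε
  set K := 63 * M / (R - θ) with hK
  have hKpos : 0 < K := by positivity
  have h := key (Real.sqrt (s + ε / K ^ 2)) (Real.sqrt_pos.2 (by positivity)) (by
    rw [Real.sq_sqrt (by positivity)]
    have : 0 < ε / K ^ 2 := by positivity
    linarith)
  calc ‖deriv f z‖ ^ 2 ≤ (K * Real.sqrt (s + ε / K ^ 2)) ^ 2 := by gcongr
    _ = K ^ 2 * s + ε := by
      rw [mul_pow, Real.sq_sqrt (by positivity)]
      field_simp

lemma aux_anti {θ : ℝ} (hθ : 0 < θ) (a : ℝ) {φ ψ : ℝ} (h1 : φ ∈ Set.Ioc a (a + Real.pi))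
    (h2 : ψ ∈ Set.Ioc a (a + Real.pi)) :
    |φ - ψ| ≤ Real.pi / (2 * θ) * ‖circleMap 0 θ φ - circleMap 0 θ ψ‖ := by
  have e : circleMap 0 θ φ - circleMap 0 θ ψ =
      θ * Complex.exp (((φ + ψ) / 2 : ℝ) * Complex.I) * (2 * Complex.I * (Real.sin ((φ - ψ) / 2) : ℝ)) := by
    simp only [circleMap, zero_add]
    have h1 : (φ : ℂ) * Complex.I = ((φ + ψ) / 2 : ℝ) * Complex.I + ((φ - ψ) / 2 : ℝ) * Complex.I := by
      push_cast; ring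
    have h2 : (ψ : ℂ) * Complex.I = ((φ + ψ) / 2 : ℝ) * Complex.I + (-(((φ - ψ) / 2 : ℝ):ℂ)) * Complex.I := by
      push_cast; ring
    rw [h1, h2, Complex.exp_add, Complex.exp_add, Complex.ofReal_sin, Complex.sin]
    linear_combination (-(θ:ℂ) * Complex.exp (((φ + ψ) / 2 : ℝ) * Complex.I) * (Complex.exp (-(((φ - ψ) / 2 : ℝ):ℂ) * Complex.I) - Complex.exp ((((φ - ψ) / 2 : ℝ):ℂ) * Complex.I))) * Complex.I_sq
  have hn : ‖circleMap 0 θ φ - circleMap 0 θ ψ‖ = 2 * θ * |Real.sin ((φ - ψ) / 2)| := by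
    rw [e, norm_mul, norm_mul, norm_mul, norm_mul, Complex.norm_exp_ofReal_mul_I, Complex.norm_I,
      Complex.norm_real, Complex.norm_real, Real.norm_of_nonneg hθ.le, Real.norm_eq_abs]
    simp; ring
  have hb : |(φ - ψ) / 2| ≤ Real.pi / 2 := by
    rw [abs_le]; constructor <;> linarith [h1.1, h1.2, h2.1, h2.2]
  have h3 := Real.mul_abs_le_abs_sin hb
  rw [hn]
  have e2 : Real.pi / (2 * θ) * (2 * θ * |Real.sin ((φ - ψ) / 2)|) = Real.pi * |Real.sin ((φ - ψ) / 2)| := by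
    field_simp
  rw [e2]
  have h4 := mul_le_mul_of_nonneg_left h3 Real.pi_pos.le
  have e3 : Real.pi * (2 / Real.pi * |(φ - ψ) / 2|) = |φ - ψ| := by
    rw [abs_div, abs_two]; field_simp
  linarith

lemma aux_meas (iso : ℂ ≃ₗᵢ[ℝ] EuclideanSpace ℝ (Fin 2)) {θ : ℝ} (hθ : 0 < θ) (a : ℝ) :
    Measure.map (fun φ => iso (circleMap 0 θ φ)) (volume.restrict (Set.Ioc a (a + Real.pi))) ≤
      (ENNReal.ofReal (Real.pi / (2 * θ))) • (Measure.hausdorffMeasure 1 : Measure (EuclideanSpace ℝ (Fin 2))).restrict (sphere 0 θ) := by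
  have hc : Continuous (fun φ => iso (circleMap 0 θ φ)) := iso.continuous.comp (continuous_circleMap 0 θ)
  rw [Measure.le_iff]
  intro s hs
  rw [Measure.map_apply hc.measurable hs, Measure.restrict_apply (hc.measurable hs), Measure.smul_apply,
    Measure.restrict_apply hs, smul_eq_mul]
  set A := (fun φ => iso (circleMap 0 θ φ)) ⁻¹' s ∩ Set.Ioc a (a + Real.pi) with hA
  let g : A → EuclideanSpace ℝ (Fin 2) := fun φ => iso (circleMap 0 θ φ)
  have hg : AntilipschitzWith (Real.toNNReal (Real.pi / (2 * θ))) g := by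
    apply AntilipschitzWith.of_le_mul_dist
    intro x y
    rw [Subtype.dist_eq, Real.dist_eq, Real.coe_toNNReal _ (by positivity), dist_eq_norm, ← map_sub,
      LinearIsometryEquiv.norm_map]
    exact aux_anti hθ a x.2.2 y.2.2
  have h1 := hg.le_hausdorffMeasure_image (d := 1) (by norm_num) Set.univ
  have h2 := (isometry_subtype_coe (s := A)).hausdorffMeasure_image (d := 1) (Or.inl (by norm_num)) Set.univ
  rw [Set.image_univ, Subtype.range_coe] at h2
  rw [← h2, hausdorffMeasure_real, ENNReal.rpow_one] at h1
  refine h1.trans ?_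
  change ENNReal.ofReal _ * _ ≤ _
  gcongr
  rintro _ ⟨x, _, rfl⟩
  refine ⟨x.2.1, ?_⟩
  simp [g, hθ.le]

lemma aux_piece (iso : ℂ ≃ₗᵢ[ℝ] EuclideanSpace ℝ (Fin 2)) {θ : ℝ} (hθ : 0 < θ) (a : ℝ)
    {v : EuclideanSpace ℝ (Fin 2) → ℝ} (h0 : ∀ x, 0 ≤ v x)
    (hintg : IntegrableOn v (sphere 0 θ) (Measure.hausdorffMeasure 1)) :
    IntegrableOn (fun φ => v (iso (circleMap 0 θ φ))) (Set.Ioc a (a + Real.pi)) ∧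
    ∫ φ in a..(a + Real.pi), v (iso (circleMap 0 θ φ)) ≤
      Real.pi / (2 * θ) * ∫ x in sphere 0 θ, v x ∂(Measure.hausdorffMeasure 1) := by
  have hc : Continuous (fun φ => iso (circleMap 0 θ φ)) := iso.continuous.comp (continuous_circleMap 0 θ)
  have hle := aux_meas iso hθ a
  have hI : Integrable v ((ENNReal.ofReal (Real.pi / (2 * θ))) • (Measure.hausdorffMeasure 1 : Measure (EuclideanSpace ℝ (Fin 2))).restrict (sphere 0 θ)) :=
    Integrable.smul_measure hintg ENNReal.ofReal_ne_top
  have hI2 := hI.mono_measure hle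
  refine ⟨(integrable_map_measure hI2.1 hc.aemeasurable).1 hI2, ?_⟩
  rw [intervalIntegral.integral_of_le (by linarith [Real.pi_pos])]
  rw [← integral_map hc.aemeasurable hI2.1]
  refine (integral_mono_measure hle (Eventually.of_forall h0) hI).trans (le_of_eq ?_)
  rw [integral_smul_measure, ENNReal.toReal_ofReal (by positivity), smul_eq_mul]

lemma aux_H (iso : ℂ ≃ₗᵢ[ℝ] EuclideanSpace ℝ (Fin 2)) {θ : ℝ} (hθ : 0 < θ)
    {v : EuclideanSpace ℝ (Fin 2) → ℝ} (h0 : ∀ x, 0 ≤ v x)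
    (hintg : IntegrableOn v (sphere 0 θ) (Measure.hausdorffMeasure 1)) :
    Real.circleAverage (fun z => v (iso z)) 0 θ ≤
      1 / (2 * θ) * ∫ x in sphere 0 θ, v x ∂(Measure.hausdorffMeasure 1) := by
  obtain ⟨i1, h1⟩ := aux_piece iso hθ 0 h0 hintg
  obtain ⟨i2, h2⟩ := aux_piece iso hθ (0 + Real.pi) h0 hintg
  have hp := Real.pi_pos
  have h3 := intervalIntegral.integral_add_adjacent_intervals
    ((intervalIntegrable_iff_integrableOn_Ioc_of_le (by linarith)).2 i1)
    ((intervalIntegrable_iff_integrableOn_Ioc_of_le (by linarith)).2 i2)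
  have e : (0:ℝ) + Real.pi + Real.pi = 2 * Real.pi := by ring
  rw [e] at h3 h2
  rw [Real.circleAverage_def, smul_eq_mul, ← h3, inv_mul_le_iff₀ (by positivity)]
  refine (add_le_add h1 h2).trans (le_of_eq ?_)
  field_simp
  ring

lemma aux_lapl {u : EuclideanSpace ℝ (Fin 2) → ℝ} {z : ℂ}
    (hu : ContDiffAt ℝ 2 u (Complex.orthonormalBasisOneI.repr z)) :
    Laplacian.laplacian (u ∘ Complex.orthonormalBasisOneI.repr) z =
      lapl u (Complex.orthonormalBasisOneI.repr z) := by
  rw [InnerProductSpace.laplacian_eq_iteratedFDeriv_orthonormalBasis _ Complex.orthonormalBasisOneI]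
  unfold lapl
  simp only []
  refine Finset.sum_congr rfl fun i _ => ?_
  have h1 := (Complex.orthonormalBasisOneI.repr.toContinuousLinearEquiv).iteratedFDerivWithin_comp_right
    u (uniqueDiffOn_univ) (x := z) (Set.mem_univ _) 2
  rw [Set.preimage_univ, iteratedFDerivWithin_univ, iteratedFDerivWithin_univ] at h1
  have h1' : iteratedFDeriv ℝ 2 (u ∘ Complex.orthonormalBasisOneI.repr) z = _ := h1
  rw [h1', ContinuousMultilinearMap.compContinuousLinearMap_apply, iteratedFDeriv_two_apply]
  have hd : DifferentiableAt ℝ (fderiv ℝ u) (Complex.orthonormalBasisOneI.repr z) :=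
    (hu.fderiv_right (m := 1) (by norm_num)).differentiableAt (by norm_num)
  have h2 := (hd.hasFDerivAt.clm_apply (hasFDerivAt_const (EuclideanSpace.single i (1:ℝ)) (Complex.orthonormalBasisOneI.repr z))).fderiv
  have h3 : Complex.orthonormalBasisOneI.repr (Complex.orthonormalBasisOneI i) = EuclideanSpace.single i (1:ℝ) :=
    Complex.orthonormalBasisOneI.repr_self i
  rw [h2, ← h3]
  simp

lemma aux_harm {u : EuclideanSpace ℝ (Fin 2) → ℝ} (hu : HarmonicFnOn u (ball 0 1)) :
    InnerProductSpace.HarmonicOnNhd (u ∘ Complex.orthonormalBasisOneI.repr) (ball 0 1) := by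
  have hmem : ∀ z ∈ ball (0:ℂ) 1, Complex.orthonormalBasisOneI.repr z ∈ ball (0 : EuclideanSpace ℝ (Fin 2)) 1 := by
    intro z hz; simpa using hz
  have hC : ∀ z ∈ ball (0:ℂ) 1, ContDiffAt ℝ 2 u (Complex.orthonormalBasisOneI.repr z) :=
    fun z hz => hu.1.contDiffAt (isOpen_ball.mem_nhds (hmem z hz))
  intro z hz
  refine ⟨(hC z hz).comp z Complex.orthonormalBasisOneI.repr.contDiff.contDiffAt, ?_⟩
  filter_upwards [isOpen_ball.mem_nhds hz] with w hw
  rw [aux_lapl (hC w hw), hu.2 _ (hmem w hw)]; rfl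

lemma aux_conj {u : EuclideanSpace ℝ (Fin 2) → ℝ} (hu : HarmonicFnOn u (ball 0 1)) :
    ∃ f : ℂ → ℂ, AnalyticOnNhd ℂ f (ball 0 1) ∧ (f 0).im = 0 ∧
      ∀ z ∈ ball (0:ℂ) 1, (f z).re = u (Complex.orthonormalBasisOneI.repr z) := by
  obtain ⟨F, hF, hre⟩ := (aux_harm hu).exists_analyticOnNhd_ball_re_eq
  refine ⟨fun z => F z - ((F 0).im : ℂ) * Complex.I, hF.sub analyticOnNhd_const, by simp, ?_⟩
  intro z hz
  simpa using hre hz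

lemma aux_comp {X Y : Type*} [TopologicalSpace X] [TopologicalSpace Y] (h : X ≃ₜ Y) (S : Set X) :
    nodalComponents (h '' S) = (fun C => h '' C) '' nodalComponents S := by
  ext C
  constructor
  · rintro ⟨_, ⟨x, hx, rfl⟩, rfl⟩
    exact ⟨_, ⟨x, hx, rfl⟩, h.image_connectedComponentIn hx⟩
  · rintro ⟨_, ⟨x, hx, rfl⟩, rfl⟩
    exact ⟨h x, ⟨x, hx, rfl⟩, (h.image_connectedComponentIn hx).symm⟩

lemma aux_nodal {u : EuclideanSpace ℝ (Fin 2) → ℝ} {f : ℂ → ℂ}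
    (hre : ∀ z ∈ ball (0:ℂ) 1, (f z).re = u (Complex.orthonormalBasisOneI.repr z)) {k : ℕ}
    (hfin : (nodalComponents {x | x ∈ ball (0 : EuclideanSpace ℝ (Fin 2)) 1 ∧ u x ≠ 0}).Finite)
    (hk : (nodalComponents {x | x ∈ ball (0 : EuclideanSpace ℝ (Fin 2)) 1 ∧ u x ≠ 0}).ncard ≤ k) :
    (nodalComponents {z | z ∈ ball (0:ℂ) 1 ∧ (f z).re ≠ 0}).Finite ∧
    (nodalComponents {z | z ∈ ball (0:ℂ) 1 ∧ (f z).re ≠ 0}).ncard ≤ k := by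
  have e : {z | z ∈ ball (0:ℂ) 1 ∧ (f z).re ≠ 0} = Complex.orthonormalBasisOneI.repr.symm.toHomeomorph ''
      {x | x ∈ ball (0 : EuclideanSpace ℝ (Fin 2)) 1 ∧ u x ≠ 0} := by
    ext z
    constructor
    · rintro ⟨hz, hn⟩
      refine ⟨Complex.orthonormalBasisOneI.repr z, ⟨by simpa using hz, by rwa [← hre z hz]⟩, ?_⟩
      exact Complex.orthonormalBasisOneI.repr.symm_apply_apply z
    · rintro ⟨x, ⟨hx, hn⟩, rfl⟩
      have hz : Complex.orthonormalBasisOneI.repr.symm x ∈ ball (0:ℂ) 1 := by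
        rw [mem_ball_zero_iff, LinearIsometryEquiv.norm_map]; simpa using hx
      refine ⟨hz, ?_⟩
      change (f (Complex.orthonormalBasisOneI.repr.symm x)).re ≠ 0
      rw [hre _ hz, LinearIsometryEquiv.apply_symm_apply]; exact hn
  rw [e, aux_comp]
  exact ⟨hfin.image _, (Set.ncard_image_le hfin).trans hk⟩

lemma aux_grad {u : EuclideanSpace ℝ (Fin 2) → ℝ} {f : ℂ → ℂ} (hf : AnalyticOnNhd ℂ f (ball 0 1))
    (hre : ∀ z ∈ ball (0:ℂ) 1, (f z).re = u (Complex.orthonormalBasisOneI.repr z)) {z : ℂ}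
    (hz : z ∈ ball (0:ℂ) 1) :
    ‖gradient u (Complex.orthonormalBasisOneI.repr z)‖ ≤ ‖deriv f z‖ := by
  set iso := Complex.orthonormalBasisOneI.repr with hiso
  have hd : HasFDerivAt f (deriv f z • (1 : ℂ →L[ℝ] ℂ)) z :=
    (hf z hz).differentiableAt.hasDerivAt.complexToReal_fderiv
  have h2 := Complex.reCLM.hasFDerivAt.comp z hd
  have hz' : iso.symm (iso z) = z := iso.symm_apply_apply z
  rw [← hz'] at h2
  have h3 := h2.comp (iso z) (iso.symm.toContinuousLinearEquiv.hasFDerivAt (x := iso z))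
  have h4 : HasFDerivAt u ((Complex.reCLM.comp (deriv f z • (1 : ℂ →L[ℝ] ℂ))).comp
      (iso.symm.toContinuousLinearEquiv : EuclideanSpace ℝ (Fin 2) →L[ℝ] ℂ)) (iso z) := by
    refine (hz' ▸ h3).congr_of_eventuallyEq ?_
    have : ball (0 : EuclideanSpace ℝ (Fin 2)) 1 ∈ nhds (iso z) :=
      isOpen_ball.mem_nhds (by simpa using hz)
    filter_upwards [this] with y hy
    have hy2 : iso.symm y ∈ ball (0:ℂ) 1 := by
      rw [mem_ball_zero_iff, LinearIsometryEquiv.norm_map]; simpa using hy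
    have := hre _ hy2
    rw [LinearIsometryEquiv.apply_symm_apply] at this
    exact this.symm
  rw [gradient, LinearIsometryEquiv.norm_map, h4.fderiv]
  refine ContinuousLinearMap.opNorm_le_bound _ (norm_nonneg _) fun y => ?_
  refine (Complex.abs_re_le_norm (deriv f z • iso.symm y)).trans ?_
  rw [norm_smul, LinearIsometryEquiv.norm_map]

/-- **Proposition 2.9** (𝒯_{k₀} ⊆ 𝒮_{N₀}, case A = Identity): there is a frequency bound
`N₀` valid for all normalized harmonic functions on the unit disc with at most `k₀`
nodal regions. -/
theorem T_subset_S (k₀ : ℕ) (hk₀ : 1 ≤ k₀) (θ : ℝ) (hθ : θ ∈ Set.Ioo (0 : ℝ) 1) :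
    ∃ N₀ : ℝ, 0 < N₀ ∧
      ∀ u : EuclideanSpace ℝ (Fin 2) → ℝ,
        HarmonicFnOn u (ball (0 : EuclideanSpace ℝ (Fin 2)) 1) →
        (nodalComponents {x | x ∈ ball (0 : EuclideanSpace ℝ (Fin 2)) 1 ∧ u x ≠ 0}).Finite →
        (nodalComponents {x | x ∈ ball (0 : EuclideanSpace ℝ (Fin 2)) 1 ∧ u x ≠ 0}).ncard ≤ k₀ →
        (∫ x in ball (0 : EuclideanSpace ℝ (Fin 2)) (1/2), (u x) ^ 2) = 1 →
        freqN u 0 θ ≤ N₀ := by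
  obtain ⟨hθ0, hθ1⟩ := hθ
  obtain ⟨C, hC, hmain⟩ := aux_main k₀ hθ0 hθ1
  set V := volume.real (ball (0 : EuclideanSpace ℝ (Fin 2)) θ) with hV
  have hV0 : 0 ≤ V := measureReal_nonneg
  refine ⟨θ * (C * (1 / (2 * θ)) * V) + 1, by positivity, ?_⟩
  intro u hu hfin hk _
  obtain ⟨f, hf, him, hre⟩ := aux_conj hu
  obtain ⟨hfin', hk'⟩ := aux_nodal hre hfin hk
  have hbd := hmain f hf him hfin' hk'
  have hH : HInt u 0 θ = ∫ x in sphere 0 θ, (u x) ^ 2 ∂(Measure.hausdorffMeasure 1) := by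
    unfold HInt; norm_num
  have hH0 : 0 ≤ HInt u 0 θ := by rw [hH]; exact integral_nonneg fun x => sq_nonneg _
  unfold freqN
  rcases hH0.eq_or_lt with h0 | h0
  · rw [← h0, div_zero]; positivity
  have hintg : IntegrableOn (fun x => (u x) ^ 2) (sphere 0 θ) (Measure.hausdorffMeasure 1) := by
    by_contra hn
    rw [hH, integral_undef hn] at h0
    exact lt_irrefl _ h0
  have hs := aux_H Complex.orthonormalBasisOneI.repr hθ0 (v := fun x => (u x) ^ 2)
    (fun x => sq_nonneg _) hintg
  rw [← hH] at hs
  have hs2 : Real.circleAverage (fun z => (f z).re ^ 2) 0 θ =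
      Real.circleAverage (fun z => (u (Complex.orthonormalBasisOneI.repr z)) ^ 2) 0 θ := by
    apply Real.circleAverage_congr_sphere
    intro z hz
    have hz1 : z ∈ ball (0:ℂ) 1 := by
      rw [mem_sphere_zero_iff_norm, abs_of_pos hθ0] at hz
      rw [mem_ball_zero_iff, hz]; exact hθ1
    change (f z).re ^ 2 = _
    rw [hre z hz1]
  have hD : DInt u 0 θ ≤ C * (1 / (2 * θ) * HInt u 0 θ) * V := by
    unfold DInt
    refine (le_abs_self _).trans ?_
    rw [← Real.norm_eq_abs, hV]
    refine norm_setIntegral_le_of_norm_le_const measure_ball_lt_top fun x hx => ?_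
    rw [Real.norm_of_nonneg (sq_nonneg _)]
    set z := Complex.orthonormalBasisOneI.repr.symm x with hz
    have hzn : ‖z‖ < θ := by rw [hz, LinearIsometryEquiv.norm_map]; simpa using hx
    have hx2 : x = Complex.orthonormalBasisOneI.repr z :=
      (Complex.orthonormalBasisOneI.repr.apply_symm_apply x).symm
    have h1 := aux_grad hf hre (z := z) (by rw [mem_ball_zero_iff]; linarith)
    rw [← hx2] at h1
    have h2 := hbd z (by rw [mem_ball_zero_iff]; exact hzn)
    calc ‖gradient u x‖ ^ 2 ≤ ‖deriv f z‖ ^ 2 := by gcongr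
      _ ≤ _ := h2
      _ ≤ _ := by rw [hs2]; exact mul_le_mul_of_nonneg_left hs hC.le
  rw [div_le_iff₀ h0]
  have := mul_le_mul_of_nonneg_left hD hθ0.le
  nlinarith
end

section
/- Let n = 2 and N₀ > 0. Then there exist θ₀ ∈ (0,1/2) and an integer k₀ ≥ 1 with the following property: for every harmonic function u on the unit disc B₁ ⊂ ℝ² satisfying u(0) = 0, ∫_{B_{1/2}} u² dx = 1 and N(0,u,r) ≤ N₀ for every r ∈ (0,1), and for every 0 < r < θ₀, one has inf_{ρ ∈ [r/2, 3r/2]} C(u,B_ρ) ≤ k₀, where C(u,B_ρ) denotes the number of connected components of {u ≠ 0} ∩ B_ρ. -/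
open MeasureTheory Metric Filter

noncomputable abbrev eC : ℂ ≃ₗᵢ[ℝ] EuclideanSpace ℝ (Fin 2) := Complex.orthonormalBasisOneI.repr

lemma eC_one : eC 1 = EuclideanSpace.single 0 1 := by
  have := Complex.orthonormalBasisOneI.repr_self 0
  simpa using this

lemma eC_I : eC Complex.I = EuclideanSpace.single 1 1 := by
  have := Complex.orthonormalBasisOneI.repr_self 1
  simpa using this

/-- second derivatives along `v` commute with `eC`. -/
lemma fd2 (u : EuclideanSpace ℝ (Fin 2) → ℝ) {z : ℂ}
    (hu : ContDiffAt ℝ 2 u (eC z)) (v : ℂ) :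
    iteratedFDeriv ℝ 2 (u ∘ eC) z ![v, v] =
      fderiv ℝ (fun y => fderiv ℝ u y (eC v)) (eC z) (eC v) := by
  rw [iteratedFDeriv_two_apply]
  simp only [Matrix.cons_val_zero, Matrix.cons_val_one]
  have h1 : ∀ᶠ w in nhds z, fderiv ℝ (u ∘ eC) w = (fderiv ℝ u (eC w)).comp
      (eC.toContinuousLinearEquiv : ℂ →L[ℝ] EuclideanSpace ℝ (Fin 2)) := by
    filter_upwards with w
    exact eC.toContinuousLinearEquiv.comp_right_fderiv
  have hd : DifferentiableAt ℝ (fderiv ℝ u) (eC z) :=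
    (hu.fderiv_right (m := 1) (by norm_num)).differentiableAt (by norm_num)
  have h2 : HasFDerivAt (fun w => (fderiv ℝ u (eC w)).comp
      (eC.toContinuousLinearEquiv : ℂ →L[ℝ] EuclideanSpace ℝ (Fin 2)))
      (((ContinuousLinearMap.compL ℝ _ _ _).flip
        (eC.toContinuousLinearEquiv : ℂ →L[ℝ] EuclideanSpace ℝ (Fin 2))).comp
        ((fderiv ℝ (fderiv ℝ u) (eC z)).comp
        (eC.toContinuousLinearEquiv : ℂ →L[ℝ] EuclideanSpace ℝ (Fin 2)))) z := by
    have := hd.hasFDerivAt.comp z eC.toContinuousLinearEquiv.hasFDerivAt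
    exact (((ContinuousLinearMap.compL ℝ _ _ _).flip
        (eC.toContinuousLinearEquiv : ℂ →L[ℝ] EuclideanSpace ℝ (Fin 2))).hasFDerivAt).comp z this
  rw [(h2.congr_of_eventuallyEq h1).fderiv]
  have h3 : HasFDerivAt (fun y => fderiv ℝ u y (eC v)) _ (eC z) :=
    hd.hasFDerivAt.clm_apply (hasFDerivAt_const (eC v) _)
  rw [h3.fderiv]
  simp

lemma exists_holo (u : EuclideanSpace ℝ (Fin 2) → ℝ) (hu : HarmonicFnOn u (ball 0 1))
    (h0 : u 0 = 0) :
    ∃ f : ℂ → ℂ, DifferentiableOn ℂ f (ball 0 1) ∧ f 0 = 0 ∧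
      ∀ z ∈ ball (0:ℂ) 1, u (eC z) = (f z).re := by
  have hcd : ∀ z ∈ ball (0:ℂ) 1, ContDiffAt ℝ 2 u (eC z) := fun z hz =>
    hu.1.contDiffAt (isOpen_ball.mem_nhds (by simpa using hz))
  have hh : InnerProductSpace.HarmonicOnNhd (u ∘ eC) (ball (0:ℂ) 1) := by
    intro z hz
    refine ⟨(hcd z hz).comp z eC.contDiff.contDiffAt, ?_⟩
    filter_upwards [isOpen_ball.mem_nhds hz] with w hw
    rw [InnerProductSpace.laplacian_eq_iteratedFDeriv_complexPlane]
    simp only [fd2 u (hcd w hw), eC_one, eC_I]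
    have := hu.2 (eC w) (by simpa using hw)
    simpa [lapl, Fin.sum_univ_two] using this
  obtain ⟨F, hF, hF2⟩ := hh.exists_analyticOnNhd_ball_re_eq
  have hF0 : (F 0).re = 0 := by
    have := hF2 (mem_ball_self (x := (0:ℂ)) one_pos)
    simpa [h0] using this
  refine ⟨fun z => F z - F 0, hF.differentiableOn.sub_const _, by simp, fun z hz => ?_⟩
  have := hF2 hz
  simp only [Function.comp] at this
  simp [hF0, ← this]

lemma grad_norm (u : EuclideanSpace ℝ (Fin 2) → ℝ) (f : ℂ → ℂ)
    (hf : DifferentiableOn ℂ f (ball 0 1)) 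
    (hre : ∀ z ∈ ball (0:ℂ) 1, u (eC z) = (f z).re) {z : ℂ} (hz : z ∈ ball (0:ℂ) 1) :
    ‖gradient u (eC z)‖ = ‖deriv f z‖ := by
  have h1 : ‖gradient u (eC z)‖ = ‖fderiv ℝ u (eC z)‖ := by
    simp [gradient]
  have h2 : fderiv ℝ (u ∘ eC) z = (fderiv ℝ u (eC z)).comp
      (eC.toContinuousLinearEquiv : ℂ →L[ℝ] EuclideanSpace ℝ (Fin 2)) :=
    eC.toContinuousLinearEquiv.comp_right_fderiv
  have h3 : ‖fderiv ℝ u (eC z)‖ = ‖fderiv ℝ (u ∘ eC) z‖ := by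
    rw [h2]
    exact (ContinuousLinearMap.opNorm_comp_linearIsometryEquiv _ eC).symm
  have hd : HasDerivAt f (deriv f z) z :=
    (hf.differentiableAt (isOpen_ball.mem_nhds hz)).hasDerivAt
  have h4 : fderiv ℝ (u ∘ eC) z = Complex.reCLM.comp
      ((ContinuousLinearMap.toSpanSingleton ℂ (deriv f z)).restrictScalars ℝ) := by
    have := (Complex.reCLM.hasFDerivAt (x := f z)).comp z (hd.hasFDerivAt.restrictScalars ℝ)
    refine (this.congr_of_eventuallyEq ?_).fderiv
    filter_upwards [isOpen_ball.mem_nhds hz] with w hw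
    simp [hre w hw]
  rw [h1, h3, h4]
  apply le_antisymm
  · refine ContinuousLinearMap.opNorm_le_bound _ (norm_nonneg _) (fun w => ?_)
    simp only [ContinuousLinearMap.comp_apply, ContinuousLinearMap.coe_restrictScalars',
      ContinuousLinearMap.toSpanSingleton_apply, smul_eq_mul, Complex.reCLM_apply]
    calc ‖(w * deriv f z).re‖ ≤ ‖w * deriv f z‖ := Complex.abs_re_le_norm _
      _ = _ := by rw [norm_mul, mul_comm]
  · set T := Complex.reCLM.comp
      ((ContinuousLinearMap.toSpanSingleton ℂ (deriv f z)).restrictScalars ℝ)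
    by_cases h : deriv f z = 0
    · simp [h]
    have := T.le_opNorm (starRingEnd ℂ (deriv f z))
    have h5 : T (starRingEnd ℂ (deriv f z)) = ‖deriv f z‖ ^ 2 := by
      simp only [T, ContinuousLinearMap.comp_apply, ContinuousLinearMap.coe_restrictScalars',
        ContinuousLinearMap.toSpanSingleton_apply, smul_eq_mul, Complex.reCLM_apply]
      rw [mul_comm, Complex.mul_conj, Complex.normSq_eq_norm_sq]
      norm_cast
    rw [h5] at this
    have hp : 0 < ‖deriv f z‖ := norm_pos_iff.2 h
    simp only [norm_pow, norm_norm, RCLike.norm_conj] at this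
    nlinarith

/-- zero counting -/
lemma zero_count {R₀ : ℝ} (hR₀ : 0 < R₀) (c : ℂ) (m : ℕ) :
    ∀ (G : ℂ → ℂ) (M : ℝ), DiffContOnCl ℂ G (ball c (3 * R₀)) →
    (∀ z ∈ closedBall c (3 * R₀), ‖G z‖ ≤ M) → ∀ Z : Finset ℂ, Z.card = m →
    (∀ z ∈ Z, ‖z - c‖ ≤ R₀ ∧ G z = 0) → 2 ^ m * ‖G c‖ ≤ M := by
  induction m with
  | zero =>
    intro G M _ hM Z _ _
    simpa using hM c (mem_closedBall_self (by positivity))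
  | succ m ih =>
    intro G M hG hM Z hZc hZ
    obtain ⟨a, ha⟩ : Z.Nonempty := Finset.card_pos.1 (by omega)
    obtain ⟨ha1, ha2⟩ := hZ a ha
    have hab : a ∈ ball c (3 * R₀) := by
      rw [mem_ball, dist_eq_norm]; linarith
    have hfac : ∀ z, G z = (z - a) * dslope G a z := by
      intro z
      have := sub_smul_dslope G a z
      rw [ha2, sub_zero, smul_eq_mul] at this
      exact this.symm
    have hcl : closure (ball c (3 * R₀)) = closedBall c (3 * R₀) :=
      closure_ball c (by positivity)
    have hd : DiffContOnCl ℂ (dslope G a) (ball c (3 * R₀)) := by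
      constructor
      · exact (Complex.differentiableOn_dslope (isOpen_ball.mem_nhds hab)).2 hG.differentiableOn
      · rw [continuousOn_dslope (Filter.mem_of_superset (isOpen_ball.mem_nhds hab) subset_closure)]
        exact ⟨hG.continuousOn, hG.differentiableAt isOpen_ball hab⟩
    have hM0 : 0 ≤ M := (norm_nonneg _).trans (hM c (mem_closedBall_self (by positivity)))
    have hbd : ∀ z ∈ closedBall c (3 * R₀), ‖dslope G a z‖ ≤ M / (2 * R₀) := by
      intro z hz
      rw [← hcl] at hz
      refine Complex.norm_le_of_forall_mem_frontier_norm_le isBounded_ball hd ?_ hz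
      intro w hw
      rw [frontier_ball c (by positivity), mem_sphere, dist_eq_norm] at hw
      have h1 : 2 * R₀ ≤ ‖w - a‖ := by
        have : ‖w - c‖ ≤ ‖w - a‖ + ‖a - c‖ := by
          simpa using norm_add_le (w - a) (a - c)
        linarith
      have h2 := hM w (by rw [mem_closedBall, dist_eq_norm]; linarith)
      rw [hfac, norm_mul] at h2
      rw [le_div_iff₀ (by positivity)]
      nlinarith [norm_nonneg (dslope G a w)]
    have := ih (dslope G a) _ hd hbd (Z.erase a) (by rw [Finset.card_erase_of_mem ha]; omega) (by
      intro z hz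
      obtain ⟨hza, hz⟩ := Finset.mem_erase.1 hz
      refine ⟨(hZ z hz).1, ?_⟩
      have := (hZ z hz).2
      rw [hfac] at this
      rcases mul_eq_zero.1 this with h | h
      · exact absurd (sub_eq_zero.1 h) hza
      · exact h)
    rw [hfac c, norm_mul, norm_sub_rev]
    rw [le_div_iff₀ (by positivity)] at this
    have h3 : (0:ℝ) ≤ 2 ^ m * ‖dslope G a c‖ := by positivity
    calc (2:ℝ) ^ (m + 1) * (‖a - c‖ * ‖dslope G a c‖)
        = 2 * ‖a - c‖ * (2 ^ m * ‖dslope G a c‖) := by ring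
      _ ≤ 2 * R₀ * (2 ^ m * ‖dslope G a c‖) := by gcongr
      _ ≤ M := by linarith

/-- topological count -/
lemma topo_count {E : Type*} [NormedAddCommGroup E] [NormedSpace ℝ E] [ProperSpace E]
    (u : E → ℝ) {ρ : ℝ} (hρ : 0 < ρ) (hρ1 : ρ < 1)
    (hc : ContinuousOn u (ball 0 1)) (γ : ℝ → E) (hγ : Continuous γ) {a b : ℝ}
    (hγs : ∀ t, γ t ∈ sphere (0:E) ρ) (hγr : ∀ p ∈ sphere (0:E) ρ, ∃ t ∈ Set.Icc a b, γ t = p)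
    (hmax : ∀ C : Set E, IsOpen C → C ⊆ ball 0 ρ → C.Nonempty → (∀ x ∈ C, u x ≠ 0) →
      ∃ p ∈ frontier C, u p ≠ 0) (m : ℕ) (Z : Finset ℝ)
    (hZ : ∀ t ∈ Set.Icc a b, u (γ t) = 0 → t ∈ Z) (hm : Z.card ≤ m) :
    (nodalComponents {x | x ∈ ball (0:E) ρ ∧ u x ≠ 0}).Finite ∧
    (nodalComponents {x | x ∈ ball (0:E) ρ ∧ u x ≠ 0}).ncard ≤ m + 1 := by
  classical
  set S : Set E := {x | x ∈ ball (0:E) ρ ∧ u x ≠ 0} with hS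
  have hsub : closedBall (0:E) ρ ⊆ ball 0 1 := closedBall_subset_ball hρ1
  have hS' : ∀ x ∈ ball (0:E) 1, u x ≠ 0 → ∃ ε > 0, ∀ y ∈ ball x ε, u y ≠ 0 := by
    intro x hx hux
    have : ∀ᶠ y in nhds x, u y ≠ 0 :=
      (hc.continuousAt (isOpen_ball.mem_nhds hx)).eventually_ne hux
    exact Metric.eventually_nhds_iff_ball.1 this
  have hSo : IsOpen S := by
    rw [Metric.isOpen_iff]
    intro x ⟨hx, hux⟩
    obtain ⟨ε, hε, h⟩ := hS' x (hsub (ball_subset_closedBall hx)) hux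
    obtain ⟨δ, hδ, h'⟩ := Metric.isOpen_iff.1 isOpen_ball x hx
    exact ⟨min ε δ, lt_min hε hδ, fun y hy => ⟨h' (ball_subset_ball (min_le_right _ _) hy),
      h y (ball_subset_ball (min_le_left _ _) hy)⟩⟩
  -- local structure at boundary points
  have hloc : ∀ p ∈ sphere (0:E) ρ, u p ≠ 0 → ∃ ε > 0, ∃ x ∈ S, ball p ε ∩ ball 0 ρ ⊆
      connectedComponentIn S x ∧ ∀ y ∈ ball p ε, u y ≠ 0 := by
    intro p hp hup
    obtain ⟨ε, hε, h⟩ := hS' p (hsub (sphere_subset_closedBall hp)) hup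
    have hpc : p ∈ closure (ball (0:E) ρ) := by
      rw [closure_ball _ hρ.ne']; exact sphere_subset_closedBall hp
    obtain ⟨x, hx1, hx2⟩ := Metric.mem_closure_iff.1 hpc ε hε
    have hxb : x ∈ ball p ε := by rwa [mem_ball, dist_comm]
    have hxS : x ∈ S := ⟨hx1, h x hxb⟩
    refine ⟨ε, hε, x, hxS, ?_, h⟩
    refine ((convex_ball p ε).inter (convex_ball 0 ρ)).isPreconnected.subset_connectedComponentIn
      ⟨hxb, hx1⟩ (fun y hy => ⟨hy.2, h y hy.1⟩)
  have hex : ∀ t : ℝ, ∃ C : Set E, u (γ t) ≠ 0 → ∃ ε > 0, ∃ x ∈ S, C = connectedComponentIn S x ∧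
      ball (γ t) ε ∩ ball 0 ρ ⊆ C := by
    intro t
    by_cases h : u (γ t) = 0
    · exact ⟨∅, fun h' => absurd h h'⟩
    · obtain ⟨ε, hε, x, hx, h1, h2⟩ := hloc _ (hγs t) h
      exact ⟨_, fun _ => ⟨ε, hε, x, hx, rfl, h1⟩⟩
  choose c hcc using hex
  -- uniqueness
  have huniq : ∀ t, u (γ t) ≠ 0 → ∀ x ∈ S, γ t ∈ closure (connectedComponentIn S x) →
      connectedComponentIn S x = c t := by
    intro t ht x hx hcl
    obtain ⟨ε, hε, x', hx', h1, h2⟩ := hcc t ht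
    obtain ⟨y, hy1, hy2⟩ := Metric.mem_closure_iff.1 hcl ε hε
    have hyS : y ∈ S := connectedComponentIn_subset _ _ hy1
    have hy3 : y ∈ c t := h2 ⟨by rwa [mem_ball, dist_comm], hyS.1⟩
    rw [h1] at hy3 ⊢
    rw [connectedComponentIn_eq hy1, connectedComponentIn_eq hy3]
  have hclos : ∀ t, u (γ t) ≠ 0 → ∀ ε > 0, (ball (γ t) ε ∩ ball (0:E) ρ).Nonempty := by
    intro t ht ε hε
    have hpc : γ t ∈ closure (ball (0:E) ρ) := by
      rw [closure_ball _ hρ.ne']; exact sphere_subset_closedBall (hγs t)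
    obtain ⟨x, hx1, hx2⟩ := Metric.mem_closure_iff.1 hpc ε hε
    exact ⟨x, by rwa [mem_ball, dist_comm], hx1⟩
  have hlc : ∀ t, u (γ t) ≠ 0 → ∀ᶠ s in nhds t, c s = c t := by
    intro t ht
    obtain ⟨ε, hε, x, hx, h1, h2⟩ := hcc t ht
    obtain ⟨ε', hε', h3⟩ := hS' (γ t) (hsub (sphere_subset_closedBall (hγs t))) ht
    have : ∀ᶠ s in nhds t, γ s ∈ ball (γ t) (min ε ε') :=
      hγ.continuousAt.eventually (isOpen_ball.mem_nhds (mem_ball_self (lt_min hε hε')))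
    filter_upwards [this] with s hs
    have hus : u (γ s) ≠ 0 := h3 _ (ball_subset_ball (min_le_right _ _) hs)
    rw [h1]
    symm
    apply huniq s hus x hx
    rw [Metric.mem_closure_iff]
    intro δ hδ
    obtain ⟨δ', hδ', h4⟩ := Metric.isOpen_iff.1 isOpen_ball (γ s)
      (ball_subset_ball (min_le_left _ _) hs)
    obtain ⟨y, hy1, hy2⟩ := hclos s hus (min δ δ') (lt_min hδ hδ')
    refine ⟨y, ?_, ?_⟩
    · rw [← h1]
      exact h2 ⟨h4 (ball_subset_ball (min_le_right _ _) hy1), hy2⟩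
    · rw [dist_comm]
      exact ball_subset_ball (min_le_left _ _) hy1
  have hconst : ∀ s t, s ≤ t → (∀ w ∈ Set.Icc s t, u (γ w) ≠ 0) → c s = c t := by
    intro s t hst h
    letI : TopologicalSpace (Set E) := ⊥
    haveI : DiscreteTopology (Set E) := ⟨rfl⟩
    refine (isPreconnected_Icc (a := s) (b := t)).constant (f := c) ?_
      (Set.left_mem_Icc.2 hst) (Set.right_mem_Icc.2 hst)
    intro w hw
    have h1 : ContinuousAt c w := by
      have : (fun _ => c w) =ᶠ[nhds w] c := by
        filter_upwards [hlc w (h w hw)] with s hs using hs.symm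
      exact (continuousAt_const (y := c w)).congr this
    exact h1.continuousWithinAt
  have hsurj : nodalComponents S ⊆ c '' {t ∈ Set.Icc a b | u (γ t) ≠ 0} := by
    rintro _ ⟨x, hx, rfl⟩
    have hCS := connectedComponentIn_subset S x
    obtain ⟨p, hp, hup⟩ := hmax (connectedComponentIn S x) hSo.connectedComponentIn
      (fun y hy => (hCS hy).1) ⟨x, mem_connectedComponentIn hx⟩ (fun y hy => (hCS hy).2)
    rw [hSo.connectedComponentIn.frontier_eq] at hp
    have hpc : p ∈ closedBall (0:E) ρ := by
      rw [← closure_ball _ hρ.ne']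
      exact closure_mono (fun y hy => (hCS hy).1) hp.1
    have hps : p ∈ sphere (0:E) ρ := by
      by_contra hps
      have hpb : p ∈ ball (0:E) ρ := by
        rw [mem_ball]; rw [mem_closedBall] at hpc; exact lt_of_le_of_ne hpc hps
      have hpS : p ∈ S := ⟨hpb, hup⟩
      apply hp.2
      obtain ⟨y, hy1, hy2⟩ := mem_closure_iff.1 hp.1 _ hSo.connectedComponentIn
        (mem_connectedComponentIn hpS)
      rw [connectedComponentIn_eq hy2, ← connectedComponentIn_eq hy1]
      exact mem_connectedComponentIn hpS
    obtain ⟨t, ht, rfl⟩ := hγr p hps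
    exact ⟨t, ⟨ht, hup⟩, (huniq t hup x hx hp.1).symm⟩
  let κ : ℝ → ℕ := fun t => (Z.filter (· < t)).card
  have hκ : ∀ s ∈ {t ∈ Set.Icc a b | u (γ t) ≠ 0}, ∀ t ∈ {t ∈ Set.Icc a b | u (γ t) ≠ 0},
      s ≤ t → κ s = κ t → c s = c t := by
    intro s hs t ht hst hk
    apply hconst s t hst
    intro w hw h0
    have hwZ : w ∈ Z := hZ w ⟨hs.1.1.trans hw.1, hw.2.trans ht.1.2⟩ h0
    have hwt : w < t := lt_of_le_of_ne hw.2 (by rintro rfl; exact ht.2 h0)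
    have : Z.filter (· < s) = Z.filter (· < t) := by
      apply Finset.eq_of_subset_of_card_le
      · intro x hx
        rw [Finset.mem_filter] at hx ⊢
        exact ⟨hx.1, hx.2.trans_le hst⟩
      · exact hk.symm.le
    have h2 : w ∈ Z.filter (· < t) := Finset.mem_filter.2 ⟨hwZ, hwt⟩
    rw [← this, Finset.mem_filter] at h2
    exact absurd hw.1 (not_le.2 h2.2)
  have hκ' : ∀ s ∈ {t ∈ Set.Icc a b | u (γ t) ≠ 0}, ∀ t ∈ {t ∈ Set.Icc a b | u (γ t) ≠ 0},
      κ s = κ t → c s = c t := by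
    intro s hs t ht hk
    rcases le_total s t with h | h
    · exact hκ s hs t ht h hk
    · exact (hκ t ht s hs h hk.symm).symm
  -- factor
  set Tt := {t ∈ Set.Icc a b | u (γ t) ≠ 0} with hTt
  have hκm : ∀ t, κ t ∈ Finset.range (m + 1) := by
    intro t
    rw [Finset.mem_range]
    exact Nat.lt_succ_of_le ((Finset.card_filter_le _ _).trans hm)
  let d : ℕ → Set E := fun k => if h : ∃ t ∈ Tt, κ t = k then c h.choose else ∅
  have hsub2 : nodalComponents S ⊆ ((Finset.range (m + 1)).image d : Finset (Set E)) := by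
    intro C hC
    obtain ⟨t, ht, rfl⟩ := hsurj hC
    rw [Finset.coe_image]
    refine ⟨κ t, hκm t, ?_⟩
    have h : ∃ t' ∈ Tt, κ t' = κ t := ⟨t, ht, rfl⟩
    simp only [d, dif_pos h]
    exact hκ' _ h.choose_spec.1 _ ht h.choose_spec.2
  refine ⟨(Finset.finite_toSet _).subset hsub2, ?_⟩
  calc _ ≤ Set.ncard (((Finset.range (m + 1)).image d : Finset (Set E)) : Set (Set E)) :=
        Set.ncard_le_ncard hsub2 (Finset.finite_toSet _)
    _ = ((Finset.range (m + 1)).image d).card := Set.ncard_coe_finset _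
    _ ≤ (Finset.range (m + 1)).card := Finset.card_image_le
    _ = m + 1 := Finset.card_range _

lemma cm_mem {t : ℝ} (ht0 : 0 ≤ t) (ht1 : t < 1) (θ : ℝ) : circleMap 0 t θ ∈ ball (0:ℂ) 1 := by
  simp [abs_of_nonneg ht0, ht1]

lemma int_exp_orth (k j : ℕ) :
    (∫ θ in (-Real.pi)..Real.pi, Complex.exp (k * θ * Complex.I) *
      Complex.exp (-(j * θ * Complex.I))) = if k = j then (2 * Real.pi : ℂ) else 0 := by
  split_ifs with h
  · subst h
    simp only [← Complex.exp_add, add_neg_cancel, Complex.exp_zero]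
    simp; ring
  · have hc : ((k:ℂ) - j) * Complex.I ≠ 0 :=
      mul_ne_zero (sub_ne_zero.2 (by exact_mod_cast h)) Complex.I_ne_zero
    have h1 : ∀ θ : ℝ, Complex.exp (k * θ * Complex.I) * Complex.exp (-(j * θ * Complex.I)) =
        Complex.exp ((((k:ℂ) - j) * Complex.I) * θ) := by
      intro θ; rw [← Complex.exp_add]; ring_nf
    simp only [h1]
    rw [integral_exp_mul_complex hc, div_eq_zero_iff]
    left
    rw [sub_eq_zero, Complex.exp_eq_exp_iff_exists_int]
    exact ⟨(k:ℤ) - j, by push_cast; ring⟩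

lemma summable_coef {g : ℂ → ℂ} {a : ℕ → ℂ}
    (h : ∀ z ∈ ball (0:ℂ) 1, HasSum (fun k => a k * z ^ k) (g z)) {t : ℝ}
    (ht0 : 0 ≤ t) (ht1 : t < 1) : Summable (fun k => ‖a k‖ * t ^ k) := by
  have := (h t (by simp [abs_of_nonneg ht0, ht1])).summable.norm
  simpa [abs_of_nonneg ht0] using this

lemma parseval {g : ℂ → ℂ} {a : ℕ → ℂ} (hg : ContinuousOn g (ball 0 1))
    (h : ∀ z ∈ ball (0:ℂ) 1, HasSum (fun k => a k * z ^ k) (g z)) {t : ℝ}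
    (ht0 : 0 ≤ t) (ht1 : t < 1) :
    HasSum (fun k => 2 * Real.pi * (‖a k‖ ^ 2 * t ^ (2 * k)))
      (∫ θ in (-Real.pi)..Real.pi, ‖g (circleMap 0 t θ)‖ ^ 2) := by
  have hsum := summable_coef h ht0 ht1
  have hcont : Continuous (fun θ => g (circleMap 0 t θ)) :=
    hg.comp_continuous (continuous_circleMap 0 t) (cm_mem ht0 ht1)
  have hpow : ∀ (k : ℕ) (θ : ℝ), circleMap 0 t θ ^ k = t ^ k * Complex.exp (k * θ * Complex.I) := by
    intro k θ
    simp only [circleMap, zero_add, mul_pow, ← Complex.exp_nat_mul]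
    ring_nf
  have hnexp : ∀ (k : ℕ) (θ : ℝ), ‖Complex.exp (k * θ * Complex.I)‖ = 1 := by
    intro k θ
    have := Complex.norm_exp_ofReal_mul_I (k * θ)
    simpa using this
  have hnexp' : ∀ (k : ℕ) (θ : ℝ), ‖Complex.exp (-(k * θ * Complex.I))‖ = 1 := by
    intro k θ
    have := Complex.norm_exp_ofReal_mul_I (-(k * θ))
    simpa using this
  -- fourier coefficients
  have hfc : ∀ j : ℕ, (∫ θ in (-Real.pi)..Real.pi, g (circleMap 0 t θ) *
      Complex.exp (-(j * θ * Complex.I))) = 2 * Real.pi * (a j * t ^ j) := by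
    intro j
    have h1 : HasSum (fun k => ∫ θ in (-Real.pi)..Real.pi, (a k * circleMap 0 t θ ^ k) *
        Complex.exp (-(j * θ * Complex.I))) (∫ θ in (-Real.pi)..Real.pi, g (circleMap 0 t θ) *
        Complex.exp (-(j * θ * Complex.I))) := by
      refine intervalIntegral.hasSum_integral_of_dominated_convergence
        (fun k _ => ‖a k‖ * t ^ k) ?_ ?_ ?_ ?_ ?_
      · intro k
        exact Continuous.aestronglyMeasurable (by fun_prop)
      · intro k
        filter_upwards with θ _
        rw [norm_mul, hnexp' j θ, norm_mul, norm_pow]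
        simp [abs_of_nonneg ht0]
      · filter_upwards with θ _ using hsum
      · exact intervalIntegrable_const
      · filter_upwards with θ _
        exact (h _ (cm_mem ht0 ht1 θ)).mul_right _
    have h2 : ∀ k : ℕ, (∫ θ in (-Real.pi)..Real.pi, (a k * circleMap 0 t θ ^ k) *
        Complex.exp (-(j * θ * Complex.I))) = if k = j then 2 * Real.pi * (a j * t ^ j) else 0 := by
      intro k
      have h3 : ∀ θ : ℝ, (a k * circleMap 0 t θ ^ k) * Complex.exp (-(j * θ * Complex.I)) =
          (a k * t ^ k) * (Complex.exp (k * θ * Complex.I) *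
            Complex.exp (-(j * θ * Complex.I))) := by
        intro θ; rw [hpow]; ring
      simp only [h3]
      rw [intervalIntegral.integral_const_mul, int_exp_orth]
      split_ifs with hkj
      · subst hkj; ring
      · simp
    simp only [h2] at h1
    exact h1.unique (hasSum_ite_eq j _)
  obtain ⟨B, hB⟩ : ∃ B : ℝ, ∀ θ, ‖g (circleMap 0 t θ)‖ ≤ B := by
    obtain ⟨B, hB⟩ := (isCompact_sphere (0:ℂ) t).exists_bound_of_continuousOn
      (hg.mono (fun z hz => by
        rw [mem_sphere] at hz; rw [mem_ball, hz]; exact ht1))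
    exact ⟨B, fun θ => hB _ (by simp [abs_of_nonneg ht0])⟩
  have h4 : HasSum (fun k => ∫ θ in (-Real.pi)..Real.pi, g (circleMap 0 t θ) *
      (starRingEnd ℂ) (a k * circleMap 0 t θ ^ k)) (∫ θ in (-Real.pi)..Real.pi,
        g (circleMap 0 t θ) * (starRingEnd ℂ) (g (circleMap 0 t θ))) := by
    refine intervalIntegral.hasSum_integral_of_dominated_convergence
        (fun k _ => B * (‖a k‖ * t ^ k)) ?_ ?_ ?_ ?_ ?_
    · intro k
      exact (hcont.mul (Complex.continuous_conj.comp (continuous_const.mul ((continuous_circleMap 0 t).pow k)))).aestronglyMeasurable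
    · intro k
      filter_upwards with θ _
      rw [norm_mul, RCLike.norm_conj, norm_mul, norm_pow]
      have : ‖circleMap 0 t θ‖ = t := by simp [abs_of_nonneg ht0]
      rw [this]
      gcongr
      exact hB θ
    · filter_upwards with θ _ using hsum.mul_left _
    · exact intervalIntegrable_const
    · filter_upwards with θ _
      exact ((h _ (cm_mem ht0 ht1 θ)).star).mul_left _
  have h5 : ∀ k, (∫ θ in (-Real.pi)..Real.pi, g (circleMap 0 t θ) *
      (starRingEnd ℂ) (a k * circleMap 0 t θ ^ k)) =
      ((2 * Real.pi * (‖a k‖ ^ 2 * t ^ (2 * k)) : ℝ) : ℂ) := by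
    intro k
    have h6 : ∀ θ : ℝ, g (circleMap 0 t θ) * (starRingEnd ℂ) (a k * circleMap 0 t θ ^ k) =
        ((starRingEnd ℂ) (a k) * t ^ k) * (g (circleMap 0 t θ) *
          Complex.exp (-(k * θ * Complex.I))) := by
      intro θ
      rw [hpow, map_mul, map_mul, map_pow, Complex.conj_ofReal, ← Complex.exp_conj]
      simp only [map_mul, Complex.conj_ofReal, Complex.conj_I, map_natCast]
      ring_nf
    simp only [h6]
    rw [intervalIntegral.integral_const_mul, hfc]
    have : (starRingEnd ℂ) (a k) * a k = ((‖a k‖ ^ 2 : ℝ) : ℂ) := by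
      rw [mul_comm, Complex.mul_conj, Complex.normSq_eq_norm_sq]
    calc _ = 2 * Real.pi * ((starRingEnd ℂ) (a k) * a k) * t ^ (2 * k) := by ring
      _ = _ := by rw [this]; push_cast; ring
  have h7 : (∫ θ in (-Real.pi)..Real.pi,
        g (circleMap 0 t θ) * (starRingEnd ℂ) (g (circleMap 0 t θ))) =
      ((∫ θ in (-Real.pi)..Real.pi, ‖g (circleMap 0 t θ)‖ ^ 2 : ℝ) : ℂ) := by
    rw [← intervalIntegral.integral_ofReal]
    congr 1
    ext θ
    rw [Complex.mul_conj, Complex.normSq_eq_norm_sq]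
  simp only [h5, h7] at h4
  exact Complex.hasSum_ofReal.1 h4

lemma int_re_sq {f : ℂ → ℂ} (hf : DifferentiableOn ℂ f (ball 0 1)) (h0 : f 0 = 0) {t : ℝ}
    (ht0 : 0 ≤ t) (ht1 : t < 1) :
    2 * (∫ θ in (-Real.pi)..Real.pi, (f (circleMap 0 t θ)).re ^ 2) =
      ∫ θ in (-Real.pi)..Real.pi, ‖f (circleMap 0 t θ)‖ ^ 2 := by
  have hcont : Continuous (fun θ => f (circleMap 0 t θ)) :=
    hf.continuousOn.comp_continuous (continuous_circleMap 0 t) (cm_mem ht0 ht1)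
  have h1 : Real.circleAverage (fun z => f z ^ 2) 0 t = 0 := by
    rw [DiffContOnCl.circleAverage]
    · simp [h0]
    · rw [abs_of_nonneg ht0]
      refine DifferentiableOn.diffContOnCl ?_
      refine (hf.pow 2).mono ?_
      exact closure_ball_subset_closedBall.trans (closedBall_subset_ball ht1)
  have h2 : (∫ θ in (-Real.pi)..Real.pi, f (circleMap 0 t θ) ^ 2) = 0 := by
    rw [Real.circleAverage_def] at h1
    have h3 := (smul_eq_zero.1 h1).resolve_left (by positivity)
    have hper : Function.Periodic (fun θ => f (circleMap 0 t θ) ^ 2) (2 * Real.pi) := by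
      intro θ
      simp only [periodic_circleMap 0 t θ]
    have := hper.intervalIntegral_add_eq (-Real.pi) 0
    rw [zero_add, h3] at this
    have hp : -Real.pi + 2 * Real.pi = Real.pi := by ring
    rwa [hp] at this
  have h4 : (∫ θ in (-Real.pi)..Real.pi, (f (circleMap 0 t θ) ^ 2).re) = 0 := by
    have := Complex.reCLM.intervalIntegral_comp_comm (μ := volume) (a := -Real.pi) (b := Real.pi)
      (f := fun θ => f (circleMap 0 t θ) ^ 2)
      ((hcont.pow 2).intervalIntegrable _ _)
    rw [h2] at this
    simpa using this
  have h5 : ∀ w : ℂ, 2 * w.re ^ 2 = ‖w‖ ^ 2 + (w ^ 2).re := by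
    intro w
    rw [← Complex.normSq_eq_norm_sq, Complex.normSq_apply, sq w, Complex.mul_re]; ring
  rw [← intervalIntegral.integral_const_mul]
  simp only [h5]
  rw [intervalIntegral.integral_add, h4, add_zero]
  · exact (hcont.norm.pow 2).intervalIntegrable _ _
  · exact (Complex.continuous_re.comp (hcont.pow 2)).intervalIntegrable _ _

lemma exists_coef {f : ℂ → ℂ} (hf : DifferentiableOn ℂ f (ball 0 1)) : ∃ a : ℕ → ℂ,
    (∀ z ∈ ball (0:ℂ) 1, HasSum (fun k => a k * z ^ k) (f z)) ∧
    (∀ z ∈ ball (0:ℂ) 1, HasSum (fun k => ((k + 1 : ℕ) * a (k + 1)) * z ^ k) (deriv f z)) := by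
  refine ⟨fun k => (k.factorial : ℂ)⁻¹ * iteratedDeriv k f 0, fun z hz => ?_, fun z hz => ?_⟩
  · refine (Complex.hasSum_taylorSeries_on_ball hf hz).congr_fun ?_
    intro k
    simp; ring
  · refine (Complex.hasSum_taylorSeries_on_ball (hf.deriv isOpen_ball) hz).congr_fun ?_
    intro k
    dsimp only
    rw [← iteratedDeriv_succ']
    have : ((k + 1 : ℕ) : ℂ) ≠ 0 := by exact_mod_cast Nat.succ_ne_zero k
    rw [Nat.factorial_succ]
    push_cast at this ⊢
    simp
    field_simp

/-- the Dirichlet energy bound -/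
lemma energy_lower {g : ℂ → ℂ} {b : ℕ → ℂ} (hg : ContinuousOn g (ball 0 1))
    (h : ∀ z ∈ ball (0:ℂ) 1, HasSum (fun k => b k * z ^ k) (g z)) {s : ℝ}
    (hs0 : 0 < s) (hs1 : s < 1) (m : ℕ) :
    ∑ k ∈ Finset.range m, Real.pi * (‖b k‖ ^ 2 * s ^ (2 * k + 2) / (k + 1)) ≤
      ∫ z in ball (0:ℂ) s, ‖g z‖ ^ 2 := by
  have hpol : (∫ z in ball (0:ℂ) s, ‖g z‖ ^ 2) =
      ∫ p in Set.Ioo 0 s ×ˢ Set.Ioo (-Real.pi) Real.pi, p.1 * ‖g (circleMap 0 p.1 p.2)‖ ^ 2 := by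
    rw [← integral_indicator measurableSet_ball, ← Complex.integral_comp_polarCoord_symm,
      polarCoord_target]
    have hset : Set.Ioo 0 s ×ˢ Set.Ioo (-Real.pi) Real.pi =
        (Set.Ioi (0:ℝ) ×ˢ Set.Ioo (-Real.pi) Real.pi) ∩ {p : ℝ × ℝ | p.1 < s} := by
      ext p; simp; tauto
    rw [hset, ← setIntegral_indicator (measurableSet_lt measurable_fst measurable_const)]
    refine setIntegral_congr_fun (measurableSet_Ioi.prod measurableSet_Ioo) ?_
    rintro ⟨r, θ⟩ ⟨hr, hθ⟩
    simp only [Set.mem_Ioi] at hr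
    have h1 : Complex.polarCoord.symm (r, θ) = circleMap 0 r θ := by
      rw [Complex.polarCoord_symm_apply, circleMap, Complex.exp_mul_I]
      simp
    simp only [h1, Set.indicator, mem_ball, Set.mem_ofPred_eq, smul_eq_mul]
    simp [abs_of_pos hr]
  have hcontF : ContinuousOn (fun p : ℝ × ℝ => p.1 * ‖g (circleMap 0 p.1 p.2)‖ ^ 2)
      (Set.Icc 0 s ×ˢ Set.Icc (-Real.pi) Real.pi) := by
    refine continuousOn_fst.mul ((ContinuousOn.norm ?_).pow 2)
    refine hg.comp (t := ball 0 1) ?_ ?_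
    · apply Continuous.continuousOn
      unfold circleMap
      fun_prop
    · rintro ⟨r, θ⟩ ⟨hr, _⟩
      exact cm_mem hr.1 (hr.2.trans_lt hs1) θ
  have hint : IntegrableOn (fun p : ℝ × ℝ => p.1 * ‖g (circleMap 0 p.1 p.2)‖ ^ 2)
      (Set.Ioo 0 s ×ˢ Set.Ioo (-Real.pi) Real.pi) (volume.prod volume) := by
    refine (hcontF.integrableOn_compact (isCompact_Icc.prod isCompact_Icc)).mono_set ?_
    exact Set.prod_mono Set.Ioo_subset_Icc_self Set.Ioo_subset_Icc_self
  rw [hpol, Measure.volume_eq_prod, setIntegral_prod _ hint]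
  have hin : ∀ r ∈ Set.Ioo 0 s, (∑ k ∈ Finset.range m, 2 * Real.pi * ‖b k‖ ^ 2 * r ^ (2 * k + 1)) ≤
      ∫ θ in Set.Ioo (-Real.pi) Real.pi, r * ‖g (circleMap 0 r θ)‖ ^ 2 := by
    intro r hr
    have := parseval hg h hr.1.le (hr.2.trans hs1)
    rw [integral_const_mul, ← integral_Ioc_eq_integral_Ioo,
      ← intervalIntegral.integral_of_le (by linarith [Real.pi_pos])]
    have h2 := sum_le_hasSum (Finset.range m) (fun k _ => by have := hr.1; positivity) this
    calc _ = r * ∑ k ∈ Finset.range m, 2 * Real.pi * (‖b k‖ ^ 2 * r ^ (2 * k)) := by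
            rw [Finset.mul_sum]; refine Finset.sum_congr rfl fun k _ => by ring
      _ ≤ _ := mul_le_mul_of_nonneg_left h2 hr.1.le
  have hcontP : Continuous (fun r : ℝ => ∑ k ∈ Finset.range m,
      2 * Real.pi * ‖b k‖ ^ 2 * r ^ (2 * k + 1)) := by fun_prop
  have hL : (∫ r in Set.Ioo 0 s, ∑ k ∈ Finset.range m, 2 * Real.pi * ‖b k‖ ^ 2 * r ^ (2 * k + 1)) =
      ∑ k ∈ Finset.range m, Real.pi * (‖b k‖ ^ 2 * s ^ (2 * k + 2) / (k + 1)) := by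
    rw [← integral_Ioc_eq_integral_Ioo, ← intervalIntegral.integral_of_le hs0.le,
      intervalIntegral.integral_finsetSum]
    · refine Finset.sum_congr rfl fun k _ => ?_
      rw [intervalIntegral.integral_const_mul, integral_pow]
      push_cast
      have : (k:ℝ) + 1 ≠ 0 := by positivity
      have : (2 * (k:ℝ) + 1 + 1) ≠ 0 := by positivity
      rw [zero_pow (by omega)]
      field_simp
      ring
    · intro k _
      exact Continuous.intervalIntegrable (by fun_prop) _ _
  rw [← hL]
  refine setIntegral_mono_on ?_ ?_ measurableSet_Ioo hin
  · exact (hcontP.integrableOn_Icc (a := 0) (b := s)).mono_set Set.Ioo_subset_Icc_self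
  · exact (Integrable.integral_prod_left (by
      rw [IntegrableOn, ← Measure.prod_restrict] at hint; exact hint))

lemma gam_surj {s : ℝ} {p : EuclideanSpace ℝ (Fin 2)} (hp : p ∈ sphere (0 : EuclideanSpace ℝ (Fin 2)) s) :
    ∃ t ∈ Set.Ioc (-Real.pi) Real.pi, eC (circleMap 0 s t) = p := by
  refine ⟨Complex.arg (eC.symm p), Complex.arg_mem_Ioc _, ?_⟩
  have hn : ‖eC.symm p‖ = s := by
    rw [LinearIsometryEquiv.norm_map]; simpa using hp
  have : circleMap 0 s (Complex.arg (eC.symm p)) = eC.symm p := by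
    rw [circleMap, zero_add, ← hn, Complex.norm_mul_exp_arg_mul_I]
  rw [this, LinearIsometryEquiv.apply_symm_apply]

lemma gam_lip {s : ℝ} (hs : 0 ≤ s) : LipschitzWith s.toNNReal (fun t => eC (circleMap 0 s t)) := by
  have h := eC.lipschitz.comp (lipschitzWith_circleMap 0 s)
  have h2 : (1 : NNReal) * Real.nnabs s = s.toNNReal := by
    rw [one_mul, Real.nnabs_of_nonneg hs]
  rw [h2] at h
  exact h

lemma haus_le {s : ℝ} (hs : 0 ≤ s) :
    (μH[1] : Measure (EuclideanSpace ℝ (Fin 2))).restrict (sphere 0 s) ≤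
      s.toNNReal • (volume.restrict (Set.Ioc (-Real.pi) Real.pi)).map
        (fun t => eC (circleMap 0 s t)) := by
  have hlip := gam_lip hs
  have hmeas : Measurable (fun t => eC (circleMap 0 s t)) := hlip.continuous.measurable
  rw [Measure.le_iff]
  intro A hA
  rw [Measure.restrict_apply hA, Measure.smul_apply, Measure.map_apply hmeas hA,
    Measure.restrict_apply (hmeas hA)]
  set γ := (fun t => eC (circleMap 0 s t))
  have hsub : A ∩ sphere 0 s ⊆ γ '' (γ ⁻¹' A ∩ Set.Ioc (-Real.pi) Real.pi) := by
    rintro p ⟨hpA, hps⟩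
    obtain ⟨t, ht, rfl⟩ := gam_surj hps
    exact ⟨t, ⟨hpA, ht⟩, rfl⟩
  refine (measure_mono hsub).trans ?_
  have := hlip.hausdorffMeasure_image_le (d := 1) zero_le_one
    (γ ⁻¹' A ∩ Set.Ioc (-Real.pi) Real.pi)
  rw [hausdorffMeasure_real] at this
  simpa using this

lemma H_facts (u : EuclideanSpace ℝ (Fin 2) → ℝ) (hu : ContinuousOn u (ball 0 1)) {s : ℝ}
    (hs0 : 0 < s) (hs1 : s < 1) :
    HInt u 0 s ≤ s * (∫ θ in (-Real.pi)..Real.pi, (u (eC (circleMap 0 s θ))) ^ 2) ∧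
    0 ≤ HInt u 0 s ∧ (HInt u 0 s = 0 → ∀ θ, u (eC (circleMap 0 s θ)) = 0) := by
  classical
  have hlip := gam_lip hs0.le
  have hmeas : Measurable (fun t => eC (circleMap 0 s t)) := hlip.continuous.measurable
  have hle := haus_le hs0.le
  have hsph : ∀ t, eC (circleMap 0 s t) ∈ sphere (0 : EuclideanSpace ℝ (Fin 2)) s := by
    intro t; simp [abs_of_pos hs0]
  have hsb : sphere (0 : EuclideanSpace ℝ (Fin 2)) s ⊆ ball 0 1 := by
    intro p hp; rw [mem_sphere] at hp; rw [mem_ball, hp]; exact hs1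
  set γ := (fun t => eC (circleMap 0 s t)) with hγ
  set w : EuclideanSpace ℝ (Fin 2) → ℝ := (ball 0 1).indicator u with hw
  have hwu : ∀ p ∈ sphere (0 : EuclideanSpace ℝ (Fin 2)) s, w p = u p := fun p hp =>
    Set.indicator_of_mem (hsb hp) u
  have hwm : Measurable w := by
    have := ContinuousOn.measurable_piecewise (f := u) (g := fun _ => (0:ℝ)) (s := ball 0 1)
      hu continuousOn_const measurableSet_ball
    convert this using 1
    ext x
    simp [w, Set.indicator, Set.piecewise]
  have hH : HInt u 0 s = ∫ x in sphere 0 s, (w x) ^ 2 ∂ μH[1] := by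
    rw [HInt]
    have : (((2:ℕ):ℝ) - 1) = 1 := by norm_num
    rw [this]
    refine setIntegral_congr_fun isClosed_sphere.measurableSet (fun x hx => ?_)
    simp only [hwu x hx]
  have hucont : Continuous (fun t => u (γ t)) :=
    hu.comp_continuous hlip.continuous (fun t => hsb (hsph t))
  have hwγ : ∀ t, w (γ t) ^ 2 = u (γ t) ^ 2 := fun t => by rw [hwu _ (hsph t)]
  have hI1 : Integrable (fun x => w x ^ 2)
      ((volume.restrict (Set.Ioc (-Real.pi) Real.pi)).map γ) := by
    rw [integrable_map_measure (hwm.pow_const 2).aestronglyMeasurable hmeas.aemeasurable]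
    have : ((fun x => w x ^ 2) ∘ γ) = fun t => u (γ t) ^ 2 := by
      ext t; exact hwγ t
    rw [this]
    exact ((hucont.pow 2).integrableOn_Icc).mono_set Set.Ioc_subset_Icc_self
  have hI2 := hI1.smul_measure_nnreal (c := s.toNNReal)
  refine ⟨?_, ?_, ?_⟩
  · rw [hH]
    refine (integral_mono_measure hle (Filter.Eventually.of_forall fun x => sq_nonneg _) hI2).trans ?_
    rw [integral_smul_nnreal_measure, integral_map hmeas.aemeasurable
      (hwm.pow_const 2).aestronglyMeasurable, intervalIntegral.integral_of_le
      (by linarith [Real.pi_pos])]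
    simp only [hwγ]
    rw [NNReal.smul_def, Real.coe_toNNReal _ hs0.le, smul_eq_mul]
  · rw [hH]
    exact integral_nonneg fun x => sq_nonneg _
  · intro h0 θ
    rw [hH, integral_eq_zero_iff_of_nonneg (fun x => sq_nonneg _) (hI2.mono_measure hle)] at h0
    by_contra hne
    have h1 : μH[1] ({x | w x ≠ 0} ∩ sphere (0 : EuclideanSpace ℝ (Fin 2)) s) = 0 := by
      have h2 := ae_iff.1 h0
      rw [Measure.restrict_apply' isClosed_sphere.measurableSet] at h2
      simpa using h2
    have h3 : ∀ᶠ t in nhds θ, u (γ t) ≠ 0 := hucont.continuousAt.eventually_ne hne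
    obtain ⟨ε, hε, h4⟩ := Metric.eventually_nhds_iff_ball.1 h3
    obtain ⟨δ, hδ0, hδε, hδ1⟩ : ∃ δ > 0, δ < ε ∧ δ < 1 := by
      refine ⟨min ε 1 / 2, by positivity, ?_, ?_⟩
      · have := min_le_left ε 1; have : 0 < min ε 1 := by positivity
        linarith
      · have := min_le_right ε 1; linarith
    set K := γ '' Set.Icc θ (θ + δ) with hK
    have hKsub : K ⊆ {x | w x ≠ 0} ∩ sphere 0 s := by
      rintro _ ⟨t, ht, rfl⟩
      refine ⟨?_, hsph t⟩
      change w (γ t) ≠ 0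
      rw [hwu _ (hsph t)]
      apply h4
      rw [mem_ball, Real.dist_eq, abs_lt]
      constructor <;> linarith [ht.1, ht.2]
    have hK0 : μH[1] K = 0 := measure_mono_null hKsub h1
    have hlipd : LipschitzWith 1 (fun y : EuclideanSpace ℝ (Fin 2) => dist y (γ θ)) :=
      LipschitzWith.dist_left _
    have h5 := hlipd.hausdorffMeasure_image_le (d := 1) zero_le_one K
    rw [hK0, mul_zero, hausdorffMeasure_real] at h5
    set d := dist (γ (θ + δ)) (γ θ) with hd
    have hd0 : 0 < d := by
      rw [hd, dist_pos]
      intro h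
      have h6 := eC.injective h
      have h9 := eq_of_circleMap_eq hs0.ne' (by
        rw [add_sub_cancel_left, abs_of_pos hδ0]; linarith [Real.pi_gt_three]) h6
      linarith
    have h7 : Set.Icc 0 d ⊆ (fun y : EuclideanSpace ℝ (Fin 2) => dist y (γ θ)) '' K := by
      have hpre : IsPreconnected ((fun y : EuclideanSpace ℝ (Fin 2) => dist y (γ θ)) '' K) :=
        (isPreconnected_Icc.image γ hlip.continuous.continuousOn).image _
          hlipd.continuous.continuousOn
      refine hpre.Icc_subset ?_ ?_
      · exact ⟨γ θ, ⟨θ, by simp [hδ0.le], rfl⟩, by simp⟩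
      · exact ⟨γ (θ + δ), ⟨θ + δ, by simp [hδ0.le], rfl⟩, rfl⟩
    have h8 := (measure_mono h7).trans h5
    rw [Real.volume_Icc] at h8
    simp at h8
    linarith

lemma series_half {x : ℕ → ℝ} {A N : ℝ} {K : ℕ} (hx : ∀ k, 0 ≤ x k) (hA : HasSum x A)
    (hN : ∀ m, ∑ k ∈ Finset.range m, (k:ℝ) * x k ≤ N * A) (hK : 0 < K) (hNK : 2 * N ≤ K) :
    A ≤ 2 * ∑ k ∈ Finset.range K, x k := by
  have hA0 : 0 ≤ A := hA.nonneg hx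
  have hKr : (0:ℝ) < K := by exact_mod_cast hK
  have h1 : ∀ m, ∑ k ∈ Finset.range m, x k ≤ (∑ k ∈ Finset.range K, x k) + A / 2 := by
    intro m
    have h2 : ∀ k ∈ Finset.range m, x k ≤ (if k < K then x k else 0) + (k * x k) / K := by
      intro k _
      have := hx k
      split_ifs with h
      · have : 0 ≤ (k * x k) / K := by positivity
        linarith
      · rw [zero_add, le_div_iff₀ hKr]
        have : (K:ℝ) ≤ k := by exact_mod_cast not_lt.1 h
        nlinarith
    refine (Finset.sum_le_sum h2).trans ?_
    rw [Finset.sum_add_distrib, ← Finset.sum_div]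
    gcongr ?_ + ?_
    · rw [← Finset.sum_filter]
      refine Finset.sum_le_sum_of_subset_of_nonneg ?_ (fun k _ _ => hx k)
      intro k hk
      simpa using (Finset.mem_filter.1 hk).2
    · rw [div_le_iff₀ hKr]
      nlinarith [hN m]
  have := le_of_tendsto' hA.tendsto_sum_nat h1
  linarith

lemma DInt_eq (u : EuclideanSpace ℝ (Fin 2) → ℝ) (f : ℂ → ℂ)
    (hf : DifferentiableOn ℂ f (ball 0 1))
    (hre : ∀ z ∈ ball (0:ℂ) 1, u (eC z) = (f z).re) {s : ℝ} (hs1 : s < 1) :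
    DInt u 0 s = ∫ z in ball (0:ℂ) s, ‖deriv f z‖ ^ 2 := by
  have h := eC.measurePreserving.setIntegral_preimage_emb
    eC.toHomeomorph.measurableEmbedding (fun x => ‖gradient u x‖ ^ 2) (ball 0 s)
  rw [DInt, ← h]
  have h2 : eC ⁻¹' ball 0 s = ball (0:ℂ) s := by
    ext z; simp only [Set.mem_preimage, mem_ball_zero_iff, LinearIsometryEquiv.norm_map]
  rw [h2]
  refine setIntegral_congr_fun measurableSet_ball (fun z hz => ?_)
  rw [grad_norm u f hf hre (ball_subset_ball hs1.le hz)]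

lemma nonzero_circle (u : EuclideanSpace ℝ (Fin 2) → ℝ) (f : ℂ → ℂ)
    (hf : DifferentiableOn ℂ f (ball 0 1)) (h0 : f 0 = 0)
    (hre : ∀ z ∈ ball (0:ℂ) 1, u (eC z) = (f z).re)
    (hnorm : (∫ x in ball (0 : EuclideanSpace ℝ (Fin 2)) (1/2), (u x) ^ 2) = 1) {s : ℝ}
    (hs0 : 0 < s) (hs1 : s < 1) : ¬ ∀ θ, u (eC (circleMap 0 s θ)) = 0 := by
  intro hz
  obtain ⟨a, ha, -⟩ := exists_coef hf
  have hp := parseval hf.continuousOn ha hs0.le hs1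
  rw [← int_re_sq hf h0 hs0.le hs1] at hp
  have h1 : ∀ θ, (f (circleMap 0 s θ)).re = 0 := fun θ => by
    rw [← hre _ (cm_mem hs0.le hs1 θ), hz θ]
  simp only [h1] at hp
  norm_num at hp
  rw [hasSum_zero_iff_of_nonneg (fun k => by positivity)] at hp
  have h2 : ∀ k, a k = 0 := by
    intro k
    have := congrFun hp k
    simpa [hs0.ne', Real.pi_ne_zero] using this
  have h3 : ∀ z ∈ ball (0:ℂ) 1, f z = 0 := by
    intro z hz
    have := ha z hz
    simp only [h2, zero_mul] at this
    exact this.unique hasSum_zero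
  have h4 : (∫ x in ball (0 : EuclideanSpace ℝ (Fin 2)) (1/2), (u x) ^ 2) = 0 := by
    rw [setIntegral_congr_fun (g := fun _ => (0:ℝ)) measurableSet_ball]
    · simp
    · intro x hx
      have hx' : eC.symm x ∈ ball (0:ℂ) 1 := by
        rw [mem_ball_zero_iff, LinearIsometryEquiv.norm_map]
        rw [mem_ball_zero_iff] at hx; linarith
      have := hre _ hx'
      rw [h3 _ hx', LinearIsometryEquiv.apply_symm_apply] at this
      simp [this]
  rw [h4] at hnorm
  norm_num at hnorm

lemma doubling (u : EuclideanSpace ℝ (Fin 2) → ℝ) (f : ℂ → ℂ)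
    (hf : DifferentiableOn ℂ f (ball 0 1)) (h0 : f 0 = 0)
    (hre : ∀ z ∈ ball (0:ℂ) 1, u (eC z) = (f z).re) (huc : ContinuousOn u (ball 0 1))
    (hnorm : (∫ x in ball (0 : EuclideanSpace ℝ (Fin 2)) (1/2), (u x) ^ 2) = 1)
    {N₀ ρ l M : ℝ} {K : ℕ} (hK : 0 < K) (hNK : 2 * N₀ ≤ K) (hN₀ : 0 < N₀)
    (hρ : 0 < ρ) (hl : 1 ≤ l) (hs1 : l * ρ < 1) (hfr : freqN u 0 (l * ρ) ≤ N₀)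
    (hM : ∀ θ, |u (eC (circleMap 0 ρ θ))| ≤ M) {z : ℂ} (hz : ‖z‖ ≤ l * ρ / 2) :
    ‖f z‖ ≤ 4 * l ^ K * M := by
  have hl0 : 0 < l := by linarith
  have hs0 : 0 < l * ρ := by positivity
  have hρ1 : ρ < 1 := by nlinarith
  have hM0 : 0 ≤ M := (abs_nonneg _).trans (hM 0)
  obtain ⟨a, ha, hb⟩ := exists_coef hf
  have hpi := Real.pi_pos
  have hps := parseval hf.continuousOn ha hs0.le hs1
  have hpr := parseval hf.continuousOn ha hρ.le hρ1
  rw [← int_re_sq hf h0 hs0.le hs1] at hps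
  rw [← int_re_sq hf h0 hρ.le hρ1] at hpr
  have hreS : ∀ θ, (f (circleMap 0 (l * ρ) θ)).re = u (eC (circleMap 0 (l * ρ) θ)) := fun θ =>
    (hre _ (cm_mem hs0.le hs1 θ)).symm
  have hreR : ∀ θ, (f (circleMap 0 ρ θ)).re = u (eC (circleMap 0 ρ θ)) := fun θ =>
    (hre _ (cm_mem hρ.le hρ1 θ)).symm
  simp only [hreS] at hps
  simp only [hreR] at hpr
  obtain ⟨hH1, hH2, hH3⟩ := H_facts u huc hs0 hs1
  set I := ∫ θ in (-Real.pi)..Real.pi, (u (eC (circleMap 0 (l * ρ) θ))) ^ 2 with hI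
  have hHpos : 0 < HInt u 0 (l * ρ) := lt_of_le_of_ne hH2
    (fun h => nonzero_circle u f hf h0 hre hnorm hs0 hs1 (hH3 h.symm))
  have hD : DInt u 0 (l * ρ) ≤ N₀ * I := by
    rw [freqN, div_le_iff₀ hHpos] at hfr
    have : l * ρ * DInt u 0 (l * ρ) ≤ (l * ρ) * (N₀ * I) := by nlinarith
    exact le_of_mul_le_mul_left this hs0
  have hdc : ContinuousOn (deriv f) (ball 0 1) := (hf.deriv isOpen_ball).continuousOn
  rw [DInt_eq u f hf hre hs1] at hD
  have hA : HasSum (fun k => ‖a k‖ ^ 2 * (l * ρ) ^ (2 * k)) (I / Real.pi) := by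
    have := hps.div_const (2 * Real.pi)
    have e : 2 * I / (2 * Real.pi) = I / Real.pi := by field_simp
    rw [e] at this
    exact this.congr_fun (fun k => by field_simp)
  have hhalf := series_half (N := N₀) (K := K) (fun k => by positivity) hA ?_ hK hNK
  swap
  · intro m
    have hx0 : ∀ k : ℕ, 0 ≤ (k:ℝ) * (‖a k‖ ^ 2 * (l * ρ) ^ (2 * k)) := fun k => by positivity
    calc _ ≤ ∑ k ∈ Finset.range (m + 1), (k:ℝ) * (‖a k‖ ^ 2 * (l * ρ) ^ (2 * k)) := by
          rw [Finset.sum_range_succ]; linarith [hx0 m]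
      _ = ∑ k ∈ Finset.range m, ((k+1 : ℕ):ℝ) * (‖a (k+1)‖ ^ 2 * (l * ρ) ^ (2 * (k+1))) := by
          rw [Finset.sum_range_succ']; simp
      _ ≤ N₀ * (I / Real.pi) := by
          have he := (energy_lower hdc hb hs0 hs1 m).trans hD
          rw [← Finset.mul_sum] at he
          rw [← mul_div_assoc, le_div_iff₀ hpi, mul_comm]
          refine le_trans (le_of_eq ?_) he
          congr 1
          refine Finset.sum_congr rfl fun k _ => ?_
          rw [norm_mul, Complex.norm_natCast]
          push_cast
          have : (k:ℝ) + 1 ≠ 0 := by positivity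
          field_simp
          ring
  have hR : ∑ k ∈ Finset.range K, ‖a k‖ ^ 2 * ρ ^ (2 * k) ≤ 2 * M ^ 2 := by
    have h1 := sum_le_hasSum (Finset.range K) (fun k _ => by positivity) hpr
    have h2 : (∫ θ in (-Real.pi)..Real.pi, (u (eC (circleMap 0 ρ θ))) ^ 2) ≤
        ∫ θ in (-Real.pi)..Real.pi, M ^ 2 := by
      refine intervalIntegral.integral_mono_on (by linarith) ?_ intervalIntegrable_const ?_
      · apply Continuous.intervalIntegrable
        refine Continuous.pow (huc.comp_continuous (gam_lip hρ.le).continuous ?_) 2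
        intro t
        rw [mem_ball_zero_iff, LinearIsometryEquiv.norm_map]
        simpa [abs_of_pos hρ] using hρ1
      · intro θ _
        exact sq_le_sq' (by linarith [neg_abs_le (u (eC (circleMap 0 ρ θ))), hM θ])
          ((le_abs_self _).trans (hM θ))
    rw [intervalIntegral.integral_const, smul_eq_mul] at h2
    rw [← Finset.mul_sum] at h1
    have h3 : 2 * Real.pi * (∑ k ∈ Finset.range K, ‖a k‖ ^ 2 * ρ ^ (2 * k)) ≤
        2 * Real.pi * (2 * M ^ 2) := by linarith
    exact le_of_mul_le_mul_left h3 (by positivity)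
  have hAle : I / Real.pi ≤ (2 * l ^ K * M) ^ 2 := by
    have h1 : ∑ k ∈ Finset.range K, ‖a k‖ ^ 2 * (l * ρ) ^ (2 * k) ≤
        l ^ (2 * K) * ∑ k ∈ Finset.range K, ‖a k‖ ^ 2 * ρ ^ (2 * k) := by
      rw [Finset.mul_sum]
      refine Finset.sum_le_sum fun k hk => ?_
      have : l ^ (2 * k) ≤ l ^ (2 * K) := pow_le_pow_right₀ hl (by
        have := Finset.mem_range.1 hk; omega)
      calc _ = l ^ (2 * k) * (‖a k‖ ^ 2 * ρ ^ (2 * k)) := by rw [mul_pow]; ring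
        _ ≤ _ := by gcongr
    have h2 : l ^ (2 * K) * ∑ k ∈ Finset.range K, ‖a k‖ ^ 2 * ρ ^ (2 * k) ≤
      l ^ (2 * K) * (2 * M ^ 2) := by gcongr
    calc _ ≤ 2 * (l ^ (2 * K) * (2 * M ^ 2)) := by linarith
      _ = _ := by ring
  have hcoef : ∀ k, ‖a k‖ * (l * ρ) ^ k ≤ 2 * l ^ K * M := by
    intro k
    refine abs_le_of_sq_le_sq' ?_ (by positivity) |>.2
    refine le_trans ?_ hAle
    have := le_hasSum hA k (fun j _ => by positivity)
    refine le_trans (le_of_eq ?_) this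
    ring
  have hg := (hasSum_geometric_two).mul_left (2 * l ^ K * M)
  have hzb : z ∈ ball (0:ℂ) 1 := by rw [mem_ball_zero_iff]; linarith
  have := (ha z hzb).norm_le_of_bounded hg (fun k => by
    rw [norm_mul, norm_pow]
    calc ‖a k‖ * ‖z‖ ^ k ≤ ‖a k‖ * (l * ρ / 2) ^ k := by gcongr
      _ = ‖a k‖ * (l * ρ) ^ k * (1 / 2) ^ k := by rw [div_eq_mul_one_div, mul_pow]; ring
      _ ≤ _ := mul_le_mul_of_nonneg_right (hcoef k) (by positivity))
  linarith

lemma max_princ (u : EuclideanSpace ℝ (Fin 2) → ℝ) (f : ℂ → ℂ)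
    (hf : DifferentiableOn ℂ f (ball 0 1))
    (hre : ∀ z ∈ ball (0:ℂ) 1, u (eC z) = (f z).re) {ρ : ℝ} (hρ1 : ρ < 1)
    (C : Set (EuclideanSpace ℝ (Fin 2))) (hCs : C ⊆ ball 0 ρ)
    (hCn : C.Nonempty) (hC0 : ∀ x ∈ C, u x ≠ 0) : ∃ p ∈ frontier C, u p ≠ 0 := by
  by_contra! hcon
  obtain ⟨x, hx⟩ := hCn
  set C' : Set ℂ := eC ⁻¹' C with hC'
  have hC's : C' ⊆ ball 0 ρ := by
    intro z hz
    have := hCs hz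
    rwa [mem_ball_zero_iff, LinearIsometryEquiv.norm_map, ← mem_ball_zero_iff] at this
  have hcl : closure C' ⊆ ball (0:ℂ) 1 :=
    (closure_mono hC's).trans (closure_ball_subset_closedBall.trans (closedBall_subset_ball hρ1))
  have hfr : ∀ z ∈ frontier C', (f z).re = 0 := by
    intro z hz
    have h1 : eC z ∈ frontier C := by
      have := eC.toHomeomorph.preimage_frontier C
      have h2 : z ∈ eC.toHomeomorph ⁻¹' frontier C := by rw [this]; exact hz
      exact h2
    rw [← hre z (hcl (frontier_subset_closure hz))]
    exact hcon _ h1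
  have hbd : Bornology.IsBounded C' := isBounded_ball.subset hC's
  have hz : eC.symm x ∈ C' := by
    change eC (eC.symm x) ∈ C
    rwa [LinearIsometryEquiv.apply_symm_apply]
  have hd : DifferentiableOn ℂ f (closure C') := hf.mono hcl
  have h1 := Complex.norm_le_of_forall_mem_frontier_norm_le hbd
    (f := fun z => Complex.exp (f z)) (hd.cexp.diffContOnCl) (C := 1)
    (fun z hz => by rw [Complex.norm_exp, hfr z hz, Real.exp_zero]) (subset_closure hz)
  have h2 := Complex.norm_le_of_forall_mem_frontier_norm_le hbd
    (f := fun z => Complex.exp (-f z)) (hd.neg.cexp.diffContOnCl) (C := 1)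
    (fun z hz => by rw [Complex.norm_exp, Complex.neg_re, hfr z hz, neg_zero, Real.exp_zero])
    (subset_closure hz)
  rw [Complex.norm_exp, Real.exp_le_one_iff] at h1 h2
  rw [Complex.neg_re] at h2
  apply hC0 x hx
  have := hre _ (hcl (subset_closure hz))
  rw [LinearIsometryEquiv.apply_symm_apply] at this
  linarith

lemma cm_eq (r t : ℝ) : (r : ℂ) * Complex.exp ((t : ℂ) * Complex.I) = circleMap 0 r t := by
  rw [circleMap, zero_add]

lemma G_facts (f : ℂ → ℂ) (hf : DifferentiableOn ℂ f (ball 0 1)) {r L B : ℝ} (hr : 0 < r)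
    (hL : r * Real.exp L < 1) (hB : ∀ z : ℂ, ‖z‖ ≤ r * Real.exp L → ‖f z‖ ≤ B) :
    ∃ G : ℂ → ℂ, (∀ t : ℝ, G t = ((f (circleMap 0 r t)).re : ℂ)) ∧
      ∀ c : ℝ, DifferentiableOn ℂ G (closedBall (c : ℂ) L) ∧
        ∀ z ∈ closedBall (c : ℂ) L, ‖G z‖ ≤ B := by
  have hn : ∀ (c : ℝ) (z : ℂ), z ∈ closedBall (c : ℂ) L →
      ‖(r : ℂ) * Complex.exp (z * Complex.I)‖ ≤ r * Real.exp L ∧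
      ‖(r : ℂ) * Complex.exp (-(z * Complex.I))‖ ≤ r * Real.exp L := by
    intro c z hz
    have h1 : |z.im| ≤ L := by
      have := Complex.abs_im_le_norm (z - c)
      simp only [Complex.sub_im, Complex.ofReal_im, sub_zero] at this
      exact this.trans (by simpa [dist_eq_norm] using hz)
    obtain ⟨h2, h3⟩ := abs_le.1 h1
    constructor
    · rw [norm_mul, Complex.norm_exp, Complex.norm_real, Real.norm_of_nonneg hr.le]
      gcongr
      simp; linarith
    · rw [norm_mul, Complex.norm_exp, Complex.norm_real, Real.norm_of_nonneg hr.le]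
      gcongr
      simp; linarith
  refine ⟨fun z => (f ((r : ℂ) * Complex.exp (z * Complex.I)) +
    (starRingEnd ℂ) (f ((starRingEnd ℂ) ((r : ℂ) * Complex.exp (-(z * Complex.I)))))) / 2, ?_, ?_⟩
  · intro t
    have h : (starRingEnd ℂ) ((r : ℂ) * Complex.exp (-(t * Complex.I))) = circleMap 0 r t := by
      rw [map_mul, Complex.conj_ofReal, ← Complex.exp_conj, ← cm_eq]
      simp
    simp only [h, cm_eq]
    rw [Complex.add_conj]
    push_cast
    ring
  · intro c
    constructor
    · intro z hz
      obtain ⟨h1, h2⟩ := hn c z hz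
      apply DifferentiableAt.differentiableWithinAt
      have hd : ∀ w : ℂ, ‖w‖ ≤ r * Real.exp L → DifferentiableAt ℂ f w := fun w hw =>
        hf.differentiableAt (isOpen_ball.mem_nhds (by
          rw [mem_ball_zero_iff]; exact hw.trans_lt hL))
      have hA : DifferentiableAt ℂ (fun z : ℂ => f ((r : ℂ) * Complex.exp (z * Complex.I))) z :=
        DifferentiableAt.comp (g := f) z (hd _ h1) (by fun_prop)
      have hg : DifferentiableAt ℂ (fun w => (starRingEnd ℂ) (f ((starRingEnd ℂ) w)))
          ((r : ℂ) * Complex.exp (-(z * Complex.I))) := by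
        have := (hd ((starRingEnd ℂ) ((r : ℂ) * Complex.exp (-(z * Complex.I))))
          (by rw [RCLike.norm_conj]; exact h2)).conj_conj
        rw [Complex.conj_conj] at this
        exact this
      have hB : DifferentiableAt ℂ (fun z : ℂ => (starRingEnd ℂ) (f ((starRingEnd ℂ)
          ((r : ℂ) * Complex.exp (-(z * Complex.I)))))) z :=
        DifferentiableAt.comp (g := fun w => (starRingEnd ℂ) (f ((starRingEnd ℂ) w)))
          (f := fun z : ℂ => (r : ℂ) * Complex.exp (-(z * Complex.I))) z hg (by fun_prop)
      exact (hA.add hB).div_const 2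
    · intro z hz
      obtain ⟨h1, h2⟩ := hn c z hz
      have e1 := hB _ h1
      have e2 := hB ((starRingEnd ℂ) ((r : ℂ) * Complex.exp (-(z * Complex.I))))
          (by rw [RCLike.norm_conj]; exact h2)
      rw [← RCLike.norm_conj] at e2
      rw [norm_div]
      have := norm_add_le (f ((r : ℂ) * Complex.exp (z * Complex.I)))
        ((starRingEnd ℂ) (f ((starRingEnd ℂ) ((r : ℂ) * Complex.exp (-(z * Complex.I))))))
      rw [div_le_iff₀ (by norm_num)]
      rw [Complex.norm_two]
      linarith

lemma main_bound {N₀ : ℝ} (hN₀ : 0 < N₀) {l : ℝ} (hl : l = 2 * Real.exp (3 * Real.pi))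
    {K n0 : ℕ} (hK : 0 < K) (hNK : 2 * N₀ ≤ K) (hn0 : 4 * l ^ K < 2 ^ n0)
    (u : EuclideanSpace ℝ (Fin 2) → ℝ)
    (hu : HarmonicFnOn u (ball (0 : EuclideanSpace ℝ (Fin 2)) 1)) (hu0 : u 0 = 0)
    (hnorm : (∫ x in ball (0 : EuclideanSpace ℝ (Fin 2)) (1/2), (u x) ^ 2) = 1)
    (hfr : ∀ r ∈ Set.Ioo (0 : ℝ) 1, freqN u 0 r ≤ N₀) {r : ℝ} (hr : 0 < r) (hr1 : l * r < 1) :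
    (nodalComponents {x | x ∈ ball (0 : EuclideanSpace ℝ (Fin 2)) r ∧ u x ≠ 0}).Finite ∧
    (nodalComponents
      {x | x ∈ ball (0 : EuclideanSpace ℝ (Fin 2)) r ∧ u x ≠ 0}).ncard ≤ n0 + 1 := by
  classical
  have hpi := Real.pi_pos
  have hl1 : 1 ≤ l := by
    have := Real.add_one_le_exp (3 * Real.pi); linarith
  have hl0 : 0 < l := by linarith
  have hr1' : r < 1 := by nlinarith
  obtain ⟨f, hf, hf0, hre⟩ := exists_holo u hu hu0
  have huc : ContinuousOn u (ball 0 1) := hu.1.continuousOn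
  have hγc : Continuous (fun t : ℝ => eC (circleMap 0 r t)) := (gam_lip hr.le).continuous
  have hγs : ∀ t : ℝ, eC (circleMap 0 r t) ∈ sphere (0 : EuclideanSpace ℝ (Fin 2)) r := by
    intro t
    rw [mem_sphere_zero_iff_norm, LinearIsometryEquiv.norm_map]
    simp [abs_of_pos hr]
  have hsub : sphere (0 : EuclideanSpace ℝ (Fin 2)) r ⊆ ball 0 1 := by
    intro p hp
    rw [mem_sphere_zero_iff_norm] at hp
    rw [mem_ball_zero_iff, hp]; exact hr1'
  obtain ⟨p, hp, hpm⟩ := (isCompact_sphere (0 : EuclideanSpace ℝ (Fin 2)) r).exists_isMaxOn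
    ⟨_, hγs 0⟩ (huc.mono hsub).abs
  obtain ⟨θ, -, rfl⟩ := gam_surj hp
  set M := |u (eC (circleMap 0 r θ))| with hMdef
  have hM : ∀ t, |u (eC (circleMap 0 r t))| ≤ M := fun t => hpm (hγs t)
  have hM0 : 0 < M := by
    refine lt_of_le_of_ne (abs_nonneg _) fun h => ?_
    refine nonzero_circle u f hf hf0 hre hnorm hr hr1' fun t => ?_
    have := hM t
    rw [← h] at this
    exact abs_nonpos_iff.1 this
  have hs : r * Real.exp (3 * Real.pi) = l * r / 2 := by rw [hl]; ring
  obtain ⟨G, hG1, hG2⟩ := G_facts f hf (r := r) (L := 3 * Real.pi) (B := 4 * l ^ K * M) hr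
    (by rw [hs]; have : 0 < l * r := by positivity
        linarith)
    (fun z hz => doubling u f hf hf0 hre huc hnorm hK hNK hN₀ hr hl1 hr1
      (hfr _ ⟨by positivity, hr1⟩) hM (by rw [← hs]; exact hz))
  obtain ⟨hGd, hGb⟩ := hG2 θ
  have hGu : ∀ t : ℝ, G t = (u (eC (circleMap 0 r t)) : ℂ) := by
    intro t
    rw [hG1, hre _ (cm_mem hr.le hr1' t)]
  have hGc : DiffContOnCl ℂ G (ball (θ : ℂ) (3 * Real.pi)) :=
    (hGd.mono closure_ball_subset_closedBall).diffContOnCl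
  have hcount : ∀ Z : Finset ℝ, (∀ t ∈ Z, t ∈ Set.Icc (θ - Real.pi) (θ + Real.pi) ∧
      u (eC (circleMap 0 r t)) = 0) → Z.card < n0 := by
    intro Z hZ
    have h := zero_count hpi (θ : ℂ) Z.card G (4 * l ^ K * M) hGc hGb
      (Z.image (fun t : ℝ => (t : ℂ)))
      (Finset.card_image_of_injective _ Complex.ofReal_injective) (by
        intro z hz
        obtain ⟨t, ht, rfl⟩ := Finset.mem_image.1 hz
        obtain ⟨⟨h1, h2⟩, h3⟩ := hZ t ht
        refine ⟨?_, by rw [hGu, h3, Complex.ofReal_zero]⟩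
        rw [← Complex.ofReal_sub, Complex.norm_real, Real.norm_eq_abs, abs_le]
        constructor <;> linarith)
    rw [hGu, Complex.norm_real, Real.norm_eq_abs, ← hMdef] at h
    have h2 : (2:ℝ) ^ Z.card ≤ 4 * l ^ K := le_of_mul_le_mul_right h hM0
    exact (pow_lt_pow_iff_right₀ (by norm_num : (1:ℝ) < 2)).1 (h2.trans_lt hn0)
  set T : Set ℝ := {t | t ∈ Set.Icc (θ - Real.pi) (θ + Real.pi) ∧
      u (eC (circleMap 0 r t)) = 0} with hT
  have hTf : T.Finite := by
    by_contra hinf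
    obtain ⟨Z, hZ1, hZ2⟩ := Set.Infinite.exists_subset_card_eq (s := T) hinf n0
    have := hcount Z (fun t ht => hZ1 ht)
    omega
  have hTc := hcount hTf.toFinset (fun t ht => hTf.mem_toFinset.1 ht)
  refine topo_count u hr hr1' huc (fun t : ℝ => eC (circleMap 0 r t)) hγc
    (a := θ - Real.pi) (b := θ + Real.pi) hγs ?_
    (fun C _ hCs hCn hC0 => max_princ u f hf hre hr1' C hCs hCn hC0) n0 hTf.toFinset
    (fun t ht h0 => hTf.mem_toFinset.2 ⟨ht, h0⟩) hTc.le
  intro q hq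
  obtain ⟨t, -, rfl⟩ := gam_surj hq
  obtain ⟨y, hy, hy2⟩ := (periodic_circleMap 0 r).exists_mem_Ioc (by positivity) t (θ - Real.pi)
  refine ⟨y, ⟨hy.1.le, ?_⟩, by rw [hy2]⟩
  have := hy.2
  linarith


/-- **Proposition 2.7** (𝒮_{N₀} ⊆ 𝒯_{k₀}, case A = Identity): given `N₀ > 0` there are
`θ₀ ∈ (0,1/2)` and `k₀ ≥ 1` such that any normalized harmonic function on the unit disc
vanishing at the origin with frequency bounded by `N₀` has, for every `r < θ₀`, some radius
`ρ ∈ [r/2, 3r/2]` with at most `k₀` nodal regions in `B_ρ`. -/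
theorem S_subset_T (N₀ : ℝ) (hN₀ : 0 < N₀) :
    ∃ θ₀ : ℝ, θ₀ ∈ Set.Ioo (0 : ℝ) (1/2) ∧
      ∃ k₀ : ℕ, 1 ≤ k₀ ∧
        ∀ u : EuclideanSpace ℝ (Fin 2) → ℝ,
          HarmonicFnOn u (ball (0 : EuclideanSpace ℝ (Fin 2)) 1) →
          u 0 = 0 →
          (∫ x in ball (0 : EuclideanSpace ℝ (Fin 2)) (1/2), (u x) ^ 2) = 1 →
          (∀ r ∈ Set.Ioo (0 : ℝ) 1, freqN u 0 r ≤ N₀) →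
          ∀ r : ℝ, 0 < r → r < θ₀ →
            ∃ ρ ∈ Set.Icc (r/2) (3*r/2),
              (nodalComponents
                {x | x ∈ ball (0 : EuclideanSpace ℝ (Fin 2)) ρ ∧ u x ≠ 0}).Finite ∧
              (nodalComponents
                {x | x ∈ ball (0 : EuclideanSpace ℝ (Fin 2)) ρ ∧ u x ≠ 0}).ncard ≤ k₀ := by
  have hpi := Real.pi_pos
  obtain ⟨l, hl⟩ : ∃ l : ℝ, l = 2 * Real.exp (3 * Real.pi) := ⟨_, rfl⟩
  have hl2 : 2 < l := by
    have := Real.add_one_le_exp (3 * Real.pi); linarith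
  obtain ⟨n0, hn0⟩ := pow_unbounded_of_one_lt (4 * l ^ (⌈2 * N₀⌉₊ + 1)) (by norm_num : (1:ℝ) < 2)
  have hNK : 2 * N₀ ≤ ((⌈2 * N₀⌉₊ + 1 : ℕ) : ℝ) := by
    have := Nat.le_ceil (2 * N₀)
    push_cast; linarith
  refine ⟨1 / l, ⟨by positivity, one_div_lt_one_div_of_lt (by norm_num) hl2⟩, n0 + 1, by omega, ?_⟩
  intro u hu hu0 hnorm hfr r hr hrl
  refine ⟨r, ⟨by linarith, by linarith⟩, ?_⟩
  refine main_bound hN₀ hl (Nat.succ_pos _) hNK hn0 u hu hu0 hnorm hfr hr ?_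
  rw [lt_div_iff₀ (by linarith)] at hrl
  linarith
end
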